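/- arXiv:2109.09931 — 2 statements merged into one kernel-verified Lean document; each statement's English description precedes it below -/
import Mathlib

section
/- Let r ≥ 2, n ≥ 2r, and let H be an M_1^{(r)}-saturated r-cgh on Ω_n. Then: (1) ρ(v_{i+1}) = λ(v_i) for every vertex v_i; (2) for all distinct vertices v_i, v_j, the intervals [ρ(v_i), λ(v_i)] and [ρ(v_j), λ(v_j)] intersect in at most one point; (3) for every j, exactly one interval of the form [ρ(v_i), λ(v_i)] contains both v_j and v_{j+1}; and (4) if λ(v_i) ≠ ρ(v_i), then λ(ρ(v_i)) = v_i and ρ(ρ(v_i)) ∈ [λ(v_i), v_i) (the half-open interval excluding v_i). -/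
/-!
Lift the circle to `ℤ` and say that an integer interval `[a, b]` is *good* if the arc it covers
contains an edge of `H`. Since a copy of `M1r r` is a pair of edges lying in complementary arcs
(`hasCopy_iff`), two complementary arcs never both contain edges of `H`. Saturation gives a
converse: an `r`-set through both endpoints of `[a, b]` is an edge unless an edge lies inside the
open arc or outside the closed one (`mem_of_span`). Hence exactly one of `[a, b]` and its
complement `[b + 1, a + n - 1]` is good (`good_dual`).

Let `R a` be the least `b` with `[a, b]` good. The same lemma shows that a shortest good interval
starting at `v` carries an edge through `v`, so `R` is a lift of `ρ` (`rhoF_pt`), and likewise `λ`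
lifts to the greatest left endpoint `L`. Self-duality reads `L b = R (b + 1) - n`, which is
`ρ(v + 1) = λ(v)`, and equivalently
  `R a ≤ b ↔ a + n ≤ R (b + 1)`.
Everything else follows from this equivalence and from `R` being monotone, commuting
with translation by `n` and satisfying `a < R a < a + n`. The intervals `[ρ(v), λ(v)]` lift to
`[R v, R (v + 1)]`, and these tile `ℤ`. Two tiles could share two points of the circle only if `R` took exactly two values
modulo `n`, which `two_tiles` excludes; every unit step lies in one tile. If `R v < R (v + 1)`,
the equivalence forces `R (R v) < v + n = R (R v + 1)`, which gives the statement on `λ(ρ(v))`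
and `ρ(ρ(v))`.
-/

open Finset

/-- An abstract convex geometric hypergraph: `m` vertices on a circle, with the
cyclic ordering `0 < 1 < ⋯ < m-1 < 0`, together with a family of edges. -/
structure CGH where
  m : ℕ
  edges : Finset (Finset (Fin m))

/-- A list of points of `Fin n` is in (strict) cyclic order if some rotation of it
is strictly increasing in the linear order of `Fin n`. -/
def CyclicSorted {n : ℕ} (l : List (Fin n)) : Prop :=
  ∃ k : ℕ, (l.rotate k).Chain' (· < ·)

/-- `H` contains a subhypergraph isomorphic to the convex geometric hypergraph `F`:
there is an injection of the vertices of `F` into `Fin n` respecting the cyclic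
orderings and sending every edge of `F` to an edge of `H`. -/
def HasCopy (F : CGH) {n : ℕ} (H : Finset (Finset (Fin n))) : Prop :=
  ∃ f : Fin F.m → Fin n, Function.Injective f ∧ CyclicSorted (List.ofFn f) ∧
    ∀ e ∈ F.edges, e.image f ∈ H

/-- `H` is an `F`-saturated `r`-uniform convex geometric hypergraph on `Fin n`. -/
def IsSat (F : CGH) (r : ℕ) {n : ℕ} (H : Finset (Finset (Fin n))) : Prop :=
  (∀ h ∈ H, h.card = r) ∧ ¬ HasCopy F H ∧
    ∀ e : Finset (Fin n), e.card = r → e ∉ H → HasCopy F (insert e H)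

/-- The saturation number `sat_○(n, F)` for `r`-uniform cgh's on `Fin n`. -/
noncomputable def satNum (F : CGH) (r n : ℕ) : ℕ :=
  sInf {k | ∃ H : Finset (Finset (Fin n)), IsSat F r H ∧ H.card = k}

/-- `M_1^{(r)}`: two geometrically disjoint `r`-tuples. -/
def M1r (r : ℕ) : CGH where
  m := 2 * r
  edges := {Finset.univ.filter (fun i : Fin (2 * r) => (i : ℕ) < r),
            Finset.univ.filter (fun i : Fin (2 * r) => r ≤ (i : ℕ))}

def M1cgh : CGH := ⟨6, {({0, 1, 2} : Finset (Fin 6)), ({3, 4, 5} : Finset (Fin 6))}⟩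
def M2cgh : CGH := ⟨6, {({0, 1, 3} : Finset (Fin 6)), ({2, 4, 5} : Finset (Fin 6))}⟩
def M3cgh : CGH := ⟨6, {({0, 2, 4} : Finset (Fin 6)), ({1, 3, 5} : Finset (Fin 6))}⟩
def S1cgh : CGH := ⟨5, {({0, 1, 4} : Finset (Fin 5)), ({0, 2, 3} : Finset (Fin 5))}⟩
def S2cgh : CGH := ⟨5, {({0, 1, 2} : Finset (Fin 5)), ({0, 3, 4} : Finset (Fin 5))}⟩
def S3cgh : CGH := ⟨5, {({0, 1, 3} : Finset (Fin 5)), ({0, 2, 4} : Finset (Fin 5))}⟩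
def D1cgh : CGH := ⟨4, {({0, 1, 2} : Finset (Fin 4)), ({0, 2, 3} : Finset (Fin 4))}⟩
def D2cgh : CGH := ⟨4, {({0, 1, 2} : Finset (Fin 4)), ({0, 1, 3} : Finset (Fin 4))}⟩

/-- The closed clockwise arc `[a, b]` in `Fin n`. -/
def arcCC {n : ℕ} (a b : Fin n) : Finset (Fin n) :=
  if a ≤ b then Finset.univ.filter (fun x => a ≤ x ∧ x ≤ b)
  else Finset.univ.filter (fun x => a ≤ x ∨ x ≤ b)

/-- The open clockwise arc `(a, b)` in `Fin n`. -/
def arcOO {n : ℕ} (a b : Fin n) : Finset (Fin n) :=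
  if a < b then Finset.univ.filter (fun x => a < x ∧ x < b)
  else Finset.univ.filter (fun x => a < x ∨ x < b)

/-- The tuple `(w_1, …, w_{2ℓ+1})` (`0`-indexed here) consists of distinct points with
`w_1 < w_3 < ⋯ < w_{2ℓ+1} < w_2 < w_4 < ⋯ < w_{2ℓ} < w_1` in the cyclic order. -/
def SemiValid {n : ℕ} (ℓ : ℕ) (w : Fin (2 * ℓ + 1) → Fin n) : Prop :=
  Function.Injective w ∧
    CyclicSorted (List.ofFn fun p : Fin (2 * ℓ + 1) =>
      w ⟨(2 * (p : ℕ)) % (2 * ℓ + 1), Nat.mod_lt _ (by omega)⟩)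

/-- A semi-valid tuple is `r`-valid if moreover `|[w_i, w_{i-1}]| ≥ r` for all `i`. -/
def RValid {n : ℕ} (r ℓ : ℕ) (w : Fin (2 * ℓ + 1) → Fin n) : Prop :=
  SemiValid ℓ w ∧ ∀ i : Fin (2 * ℓ + 1), r ≤ (arcCC (w i) (w (i - 1))).card

/-- `H_n^{(r)}(C)`: all `r`-sets meeting every interval `[w_i, w_{i-1}]`. -/
def HnC {n : ℕ} (r ℓ : ℕ) (w : Fin (2 * ℓ + 1) → Fin n) : Finset (Finset (Fin n)) :=
  (Finset.powersetCard r Finset.univ).filter fun e =>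
    ∀ i : Fin (2 * ℓ + 1), (e ∩ arcCC (w i) (w (i - 1))).Nonempty

/-- `j` is the vertex `λ(v)` for `v` in `H`. -/
def IsLam {n : ℕ} [NeZero n] (H : Finset (Finset (Fin n))) (v j : Fin n) : Prop :=
  (∃ h ∈ H, v ∈ h ∧ h ⊆ arcCC j v) ∧ ¬ ∃ h ∈ H, v ∈ h ∧ h ⊆ arcCC (j + 1) v

/-- `j` is the vertex `ρ(v)` for `v` in `H`. -/
def IsRho {n : ℕ} [NeZero n] (H : Finset (Finset (Fin n))) (v j : Fin n) : Prop :=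
  (∃ h ∈ H, v ∈ h ∧ h ⊆ arcCC v j) ∧ ¬ ∃ h ∈ H, v ∈ h ∧ h ⊆ arcCC v (j - 1)

noncomputable def lamF {n : ℕ} [NeZero n] (H : Finset (Finset (Fin n))) (v : Fin n) : Fin n :=
  letI := Classical.propDecidable (∃ j, IsLam H v j)
  if h : ∃ j, IsLam H v j then h.choose else v

noncomputable def rhoF {n : ℕ} [NeZero n] (H : Finset (Finset (Fin n))) (v : Fin n) : Fin n :=
  letI := Classical.propDecidable (∃ j, IsRho H v j)
  if h : ∃ j, IsRho H v j then h.choose else v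

/-- Strict cyclic betweenness on `Fin n`. -/
def CyclicSbtw {n : ℕ} (a b c : Fin n) : Prop :=
  (a < b ∧ b < c) ∨ (b < c ∧ c < a) ∨ (c < a ∧ a < b)

/-- Isomorphism of two cgh's on `Fin n`: a bijection of the vertex set respecting the
cyclic order and inducing a bijection of the edge sets. -/
def CGHIso {n : ℕ} (H H' : Finset (Finset (Fin n))) : Prop :=
  ∃ g : Fin n ≃ Fin n,
    (∀ a b c : Fin n, CyclicSbtw a b c → CyclicSbtw (g a) (g b) (g c)) ∧
    ∀ e : Finset (Fin n), e ∈ H ↔ e.image g ∈ H'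

/-- The 3-cgh `H_n^{(3)}`: all triples containing `v_0`, together with all triples
containing one of the pairs `{v_1, v_{n-2}}`, `{v_1, v_{n-1}}`, `{v_2, v_{n-1}}`. -/
def Hn3 (n : ℕ) (hn : 6 ≤ n) : Finset (Finset (Fin n)) :=
  (Finset.powersetCard 3 Finset.univ).filter fun e =>
    (⟨0, by omega⟩ : Fin n) ∈ e ∨
    ((⟨1, by omega⟩ : Fin n) ∈ e ∧ (⟨n - 2, by omega⟩ : Fin n) ∈ e) ∨
    ((⟨1, by omega⟩ : Fin n) ∈ e ∧ (⟨n - 1, by omega⟩ : Fin n) ∈ e) ∨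
    ((⟨2, by omega⟩ : Fin n) ∈ e ∧ (⟨n - 1, by omega⟩ : Fin n) ∈ e)

/-- Saturation with respect to a family of cgh's. -/
def FamSat (ℱ : Set CGH) (r : ℕ) {n : ℕ} (H : Finset (Finset (Fin n))) : Prop :=
  (∀ h ∈ H, h.card = r) ∧ (∀ F ∈ ℱ, ¬ HasCopy F H) ∧
    ∀ e : Finset (Fin n), e.card = r → e ∉ H → ∃ F ∈ ℱ, HasCopy F (insert e H)

noncomputable def famSatNum (ℱ : Set CGH) (r n : ℕ) : ℕ :=
  sInf {k | ∃ H : Finset (Finset (Fin n)), FamSat ℱ r H ∧ H.card = k}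

/-- Rotation of a point of `Fin n` by an integer amount `m`. -/
def finShift {n : ℕ} (hn : 0 < n) (v : Fin n) (m : ℤ) : Fin n :=
  ⟨(((v : ℤ) + m) % (n : ℤ)).toNat, by
    have h0 : (0 : ℤ) < (n : ℤ) := by exact_mod_cast hn
    have h1 := Int.emod_nonneg ((v : ℤ) + m) (by omega : (n : ℤ) ≠ 0)
    have h2 := Int.emod_lt_of_pos ((v : ℤ) + m) h0
    omega⟩

/-- The tuple `w` is `(i,k)`-consecutive: starting from position `i`, the entries at
positions `i, i+2, …, i+2(k-1)` are `k` consecutive points `v_j, v_{j+1}, …, v_{j+k-1}`. -/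
def ConsecAt {n ℓ : ℕ} (hn : 0 < n) (w : Fin (2 * ℓ + 1) → Fin n)
    (i : Fin (2 * ℓ + 1)) (k : ℕ) : Prop :=
  ∃ j : Fin n, ∀ s : ℕ, s < k →
    w (i + ⟨(2 * s) % (2 * ℓ + 1), Nat.mod_lt _ (by omega)⟩) = finShift hn j s

/-- The tuple `C_{i,k,m}`: the `k` consecutive points at positions `i, i+2, …, i+2(k-1)`
are rotated by `m` units; all other entries are unchanged. -/
def shiftTuple {n ℓ : ℕ} (hn : 0 < n) (w : Fin (2 * ℓ + 1) → Fin n)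
    (i : Fin (2 * ℓ + 1)) (k : ℕ) (m : ℤ) : Fin (2 * ℓ + 1) → Fin n :=
  fun p => if (p - i).val % 2 = 0 ∧ (p - i).val / 2 < k then finShift hn (w p) m else w p

/-- The two edges of `M1r r` made explicit, with vertex type `Fin (2 * r)` rather than
`Fin (M1r r).m`. -/
lemma hasCopy_M1r_iff {n r : ℕ} {H : Finset (Finset (Fin n))} :
    HasCopy (M1r r) H ↔ ∃ f : Fin (2 * r) → Fin n, Function.Injective f ∧
      CyclicSorted (List.ofFn f) ∧
      (Finset.univ.filter fun i : Fin (2 * r) => (i : ℕ) < r).image f ∈ H ∧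
      (Finset.univ.filter fun i : Fin (2 * r) => r ≤ (i : ℕ)).image f ∈ H := by
  constructor
  · rintro ⟨f, h1, h2, he⟩
    exact ⟨f, h1, h2, he _ (Finset.mem_insert_self _ _),
      he _ (Finset.mem_insert_of_mem (Finset.mem_singleton_self _))⟩
  · rintro ⟨f, h1, h2, h3, h4⟩
    refine ⟨f, h1, h2, fun e he => ?_⟩
    rcases Finset.mem_insert.1 he with he | he
    · rw [he]
      exact h3
    · rw [Finset.mem_singleton.1 he]
      exact h4

/-! ### Lifting the circle to the integers -/

/-- The universal covering `ℤ → Fin n` of the circle, i.e. reduction modulo `n`. -/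
def pt (n : ℕ) [NeZero n] (t : ℤ) : Fin n :=
  ⟨(t % (n : ℤ)).toNat, by
    have h0 : (0 : ℤ) < n := by exact_mod_cast Nat.pos_of_ne_zero (NeZero.ne n)
    have h1 := Int.emod_nonneg t h0.ne'
    have h2 := Int.emod_lt_of_pos t h0
    omega⟩

/-- `h` is contained in the image of the integer interval `[a, b]`. The image is the empty arc
if `b < a` and the whole circle if `b ≥ a + n - 1`, so unlike `arcCC` this encoding has no
wrap-around conventions; the complement of `[a, b]` is `[b + 1, a + n - 1]`. -/
def InArc {n : ℕ} [NeZero n] (h : Finset (Fin n)) (a b : ℤ) : Prop :=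
  ∀ x ∈ h, ∃ t, a ≤ t ∧ t ≤ b ∧ pt n t = x

section
variable {n : ℕ} [NeZero n]

lemma n_pos : (0 : ℤ) < n := by exact_mod_cast Nat.pos_of_ne_zero (NeZero.ne n)

lemma pt_val (t : ℤ) : ((pt n t : ℕ) : ℤ) = t % n :=
  Int.toNat_of_nonneg (Int.emod_nonneg t (n_pos (n := n)).ne')

lemma pt_decomp (t : ℤ) : ∃ m : ℤ, t = (pt n t : ℕ) + n * m :=
  ⟨t / n, by rw [pt_val]; exact (Int.emod_add_mul_ediv t n).symm⟩

lemma pt_eq_iff {s t : ℤ} : pt n s = pt n t ↔ ∃ k : ℤ, s = t + n * k := by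
  rw [Fin.ext_iff, ← Int.natCast_inj, pt_val, pt_val, Int.emod_eq_emod_iff_emod_sub_eq_zero,
    ← Int.dvd_iff_emod_eq_zero]
  constructor
  · rintro ⟨k, hk⟩
    exact ⟨k, by linarith⟩
  · rintro ⟨k, rfl⟩
    exact ⟨k, by ring⟩

lemma pt_natCast (x : Fin n) : pt n (x : ℕ) = x := by
  rw [Fin.ext_iff, ← Int.natCast_inj, pt_val]
  exact Int.emod_eq_of_lt (by positivity) (by exact_mod_cast x.2)

lemma pt_eq_of_decomp {x : Fin n} {t m : ℤ} (h : t = (x : ℕ) + n * m) : pt n t = x := by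
  rw [← pt_natCast x]; exact pt_eq_iff.2 ⟨m, h⟩

/-- Every point has a lift in any window of `n` consecutive integers. -/
lemma exists_pt (a : ℤ) (x : Fin n) : ∃ t, a ≤ t ∧ t < a + n ∧ pt n t = x := by
  refine ⟨a + ((x : ℕ) - a) % n, ?_, ?_, ?_⟩
  · have := Int.emod_nonneg ((x : ℕ) - a) (n_pos (n := n)).ne'
    omega
  · have := Int.emod_lt_of_pos ((x : ℕ) - a) (n_pos (n := n))
    omega
  · apply pt_eq_of_decomp (m := - (((x : ℕ) - a) / n))
    have := Int.emod_add_mul_ediv ((x : ℕ) - a) n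
    linarith

lemma pt_add_one (t : ℤ) : pt n t + 1 = pt n (t + 1) := by
  rw [Fin.ext_iff, ← Int.natCast_inj, pt_val, Fin.val_add, Fin.val_one']
  push_cast
  rw [pt_val, ← Int.add_emod]

lemma pt_sub_one (t : ℤ) : pt n t - 1 = pt n (t - 1) := by
  rw [sub_eq_iff_eq_add, pt_add_one, sub_add_cancel]

/-- Lifts at distance less than `n` are determined by their images. -/
lemma pt_inj {s t : ℤ} (h : pt n s = pt n t) (h1 : s < t + n) (h2 : t < s + n) : s = t := by
  obtain ⟨k, rfl⟩ := pt_eq_iff.1 h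
  have : k = 0 := by
    have := n_pos (n := n)
    have : k < 1 := by nlinarith
    have : -1 < k := by nlinarith
    omega
  simp [this]

/-- For lifts `a ≤ b < a + n` of its endpoints, the arc `arcCC` is the image of `[a, b]`. -/
lemma mem_arcCC {a b : ℤ} (h1 : a ≤ b) (h2 : b < a + n) (x : Fin n) :
    x ∈ arcCC (pt n a) (pt n b) ↔ ∃ t, a ≤ t ∧ t ≤ b ∧ pt n t = x := by
  obtain ⟨p, hp⟩ := pt_decomp (n := n) a
  obtain ⟨q, hq⟩ := pt_decomp (n := n) b
  have hn := n_pos (n := n)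
  have hA := (pt n a).2
  have hB := (pt n b).2
  have hX := x.2
  -- `[a, b]` meets at most two consecutive fundamental domains `[n * p, n * (p + 1))`.
  have hpq : q = p ∨ q = p + 1 := by
    have : q < p + 2 := by nlinarith
    have : p - 1 < q := by nlinarith
    omega
  have key : x ∈ arcCC (pt n a) (pt n b) ↔
      (((pt n a : ℕ) ≤ pt n b ∧ (pt n a : ℕ) ≤ x ∧ (x : ℕ) ≤ pt n b) ∨
      ((pt n b : ℕ) < pt n a ∧ ((pt n a : ℕ) ≤ x ∨ (x : ℕ) ≤ pt n b))) := by
    unfold arcCC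
    split_ifs with h
    · rw [Fin.le_def] at h
      simp only [Finset.mem_filter, Finset.mem_univ, true_and]
      rw [Fin.le_def, Fin.le_def]
      omega
    · rw [Fin.le_def] at h
      simp only [Finset.mem_filter, Finset.mem_univ, true_and]
      rw [Fin.le_def, Fin.le_def]
      omega
  rw [key]
  generalize (pt n a : ℕ) = A at *
  generalize (pt n b : ℕ) = B at *
  constructor
  · intro h
    by_cases hx : A ≤ (x : ℕ)
    · refine ⟨x + n * p, by omega, ?_, pt_eq_of_decomp rfl⟩
      rcases hpq with rfl | rfl
      · omega
      · rw [mul_add] at hq; omega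
    · refine ⟨x + n * (p + 1), ?_, ?_, pt_eq_of_decomp rfl⟩
      · rw [mul_add]; omega
      · rcases hpq with rfl | rfl
        · omega
        · omega
  · rintro ⟨t, ht1, ht2, rfl⟩
    obtain ⟨m, hm⟩ := pt_decomp (n := n) t
    have hm' : m = p ∨ m = p + 1 := by
      have : m < p + 2 := by nlinarith
      have : p - 1 < m := by nlinarith
      omega
    rcases hpq with rfl | rfl <;> rcases hm' with rfl | rfl <;>
      (try simp only [mul_add] at hq hm) <;> omega

/-! ### Copies of `M1r` as pairs of edges in complementary arcs -/

lemma pt_val_of_mem {t m : ℤ} (h1 : n * m ≤ t) (h2 : t < n * m + n) :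
    ((pt n t : ℕ) : ℤ) = t - n * m := by
  rw [pt_val, show t = (t - n * m) + n * m by ring, Int.add_mul_emod_self_left,
    Int.emod_eq_of_lt (by linarith) (by linarith)]
  ring

/-- A strictly increasing sequence of integers spanning less than `n` is cyclically sorted
modulo `n`: rotating by the index `s` of the first term beyond the next multiple of `n` sorts
the residues. -/
lemma cyclicSorted_of_lift {N : ℕ} (F : ℕ → ℤ) (hF : ∀ i j, i < j → j < N → F i < F j)
    (hF' : ∀ j, j < N → F j < F 0 + n) :
    CyclicSorted (List.ofFn fun i : Fin N => pt n (F i)) := by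
  have hn := n_pos (n := n)
  obtain ⟨q, hq1, hq2⟩ : ∃ q : ℤ, n * q ≤ F 0 ∧ F 0 < n * q + n :=
    ⟨F 0 / n, by have := Int.emod_add_mul_ediv (F 0) n; have := Int.emod_nonneg (F 0) hn.ne'; omega,
      by have := Int.emod_add_mul_ediv (F 0) n; have := Int.emod_lt_of_pos (F 0) hn; omega⟩
  obtain ⟨s, hs, hs1, hs2⟩ : ∃ s, s ≤ N ∧ (∀ j, j < s → F j < n * q + n) ∧
      ∀ j, s ≤ j → j < N → n * q + n ≤ F j := by
    classical
    have hex : ∃ j, N ≤ j ∨ n * q + n ≤ F j := ⟨N, Or.inl le_rfl⟩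
    refine ⟨Nat.find hex, Nat.find_min' hex (Or.inl le_rfl), fun j hj => ?_, fun j hj hjN => ?_⟩
    · have := Nat.find_min hex hj
      push Not at this
      exact this.2
    · rcases Nat.find_spec hex with h | h
      · omega
      · rcases hj.eq_or_lt with e | e
        · rw [← e]; exact h
        · exact h.trans (hF _ _ e hjN).le
  refine ⟨s, List.isChain_iff_pairwise.2 (List.pairwise_iff_getElem.2 ?_)⟩
  intro i j hi hj hij
  simp only [List.length_rotate, List.length_ofFn] at hi hj
  have h0 : ∀ j, j < N → F 0 ≤ F j := fun j hj => by
    rcases Nat.eq_zero_or_pos j with rfl | h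
    · exact le_rfl
    · exact (hF _ _ h hj).le
  have hval : ∀ i, i < N → i + s < N →
      ((pt n (F ((i + s) % N)) : ℕ) : ℤ) = F (i + s) - (n * q + n) := by
    intro i _ h
    rw [Nat.mod_eq_of_lt h, pt_val_of_mem (m := q + 1)]
    · ring
    · have := hs2 (i + s) (by omega) h
      linarith
    · have := hF' _ h
      linarith
  have hval' : ∀ i, i < N → N ≤ i + s →
      ((pt n (F ((i + s) % N)) : ℕ) : ℤ) = F (i + s - N) - n * q := by
    intro i _ h
    rw [Nat.mod_eq_sub_mod h, Nat.mod_eq_of_lt (by omega), pt_val_of_mem (m := q)]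
    · have := h0 (i + s - N) (by omega)
      linarith
    · exact hs1 _ (by omega)
  simp only [List.getElem_rotate, List.getElem_ofFn, List.length_ofFn]
  rw [Fin.lt_def, ← Int.ofNat_lt]
  by_cases h1 : i + s < N <;> by_cases h2 : j + s < N
  · rw [hval i hi h1, hval j hj h2]
    have := hF (i + s) (j + s) (by omega) h2
    linarith
  · rw [hval i hi h1, hval' j hj (by omega)]
    have := hF' _ h1
    have := h0 (j + s - N) (by omega)
    linarith
  · omega
  · rw [hval' i hi (by omega), hval' j hj (by omega)]
    have := hF (i + s - N) (j + s - N) (by omega) (by omega)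
    linarith

/-- Conversely, a cyclically sorted sequence lifts to a strictly increasing sequence of integers
spanning less than `n`: the terms before the rotation index `s` are lowered by `n`. -/
lemma lift_of_cyclicSorted {N : ℕ} (hN : 0 < N) (f : Fin N → Fin n)
    (hf : CyclicSorted (List.ofFn f)) :
    ∃ F : ℕ → ℤ, (∀ i j, i < j → j < N → F i < F j) ∧ (∀ j, j < N → F j < F 0 + n) ∧
      ∀ i : Fin N, pt n (F i) = f i := by
  obtain ⟨k, hk⟩ := hf
  have hk := List.pairwise_iff_getElem.1 (List.isChain_iff_pairwise.1 hk)
  simp only [List.length_rotate, List.length_ofFn, List.getElem_rotate, List.getElem_ofFn] at hk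
  -- `f'` is the `N`-periodic extension of `f`, with values in `[0, n)`.
  let f' : ℕ → ℤ := fun i => (f ⟨i % N, Nat.mod_lt _ hN⟩ : ℕ)
  let s := k % N
  have hs : s < N := Nat.mod_lt _ hN
  have hper : ∀ i, f' (i + N) = f' i := fun i => by simp [f']
  have hf0 : ∀ i, 0 ≤ f' i := fun i => by positivity
  have hfn : ∀ i, f' i < n := fun i => by simp only [f']; exact_mod_cast Fin.is_lt _
  have hlt : ∀ x y, s ≤ x → x < y → y < s + N → f' x < f' y := by
    intro x y h1 h2 h3
    have e : ∀ z, s ≤ z → (z - s + k) % N = z % N := fun z hz => by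
      have : z - s + k = z + N * (k / N) := by
        have : s + N * (k / N) = k := Nat.mod_add_div k N
        omega
      rw [this, Nat.add_mul_mod_self_left]
    have := hk (x - s) (y - s) (by omega) (by omega) (by omega)
    rw [Fin.lt_def] at this
    simp only [e x h1, e y (by omega)] at this
    exact Int.ofNat_lt.2 this
  refine ⟨fun j => if s ≤ j then f' j else f' j - n, ?_, ?_, ?_⟩
  · intro i j hij hj
    have a1 := hf0 j
    have a2 := hfn i
    dsimp only
    split_ifs with h1 h2 h2
    · exact hlt _ _ h1 hij (by omega)
    · omega
    · omega
    · have := hlt (i + N) (j + N) (by omega) (by omega) (by omega)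
      rw [hper, hper] at this
      omega
  · intro j hj
    have a1 := hf0 0
    have a2 := hfn j
    dsimp only
    split_ifs with h1 h2 h2
    · omega
    · have := hlt j (0 + N) h1 (by omega) (by omega)
      rw [hper] at this
      omega
    · omega
    · omega
  · intro i
    dsimp only
    have e : f' i = (f i : ℕ) := by simp only [f', Nat.mod_eq_of_lt i.2]
    split_ifs
    · exact pt_eq_of_decomp (m := 0) (by rw [e]; ring)
    · exact pt_eq_of_decomp (m := -1) (by rw [e]; ring)

lemma InArc.exists_lift {h : Finset (Fin n)} {a b : ℤ} (hh : InArc h a b) (hab : b < a + n) :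
    ∃ S : Finset ℤ, (∀ t ∈ S, a ≤ t ∧ t ≤ b) ∧ S.image (pt n) = h ∧ S.card = h.card := by
  have him : ((Finset.Icc a b).filter fun t => pt n t ∈ h).image (pt n) = h := by
    ext x
    simp only [Finset.mem_image, Finset.mem_filter, Finset.mem_Icc]
    constructor
    · rintro ⟨t, ⟨-, ht⟩, rfl⟩
      exact ht
    · intro hx
      obtain ⟨t, h1, h2, rfl⟩ := hh x hx
      exact ⟨t, ⟨⟨h1, h2⟩, hx⟩, rfl⟩
  refine ⟨(Finset.Icc a b).filter fun t => pt n t ∈ h, ?_, him, ?_⟩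
  · intro t ht
    simpa using (Finset.mem_filter.1 ht).1
  · conv_rhs => rw [← him]
    refine (Finset.card_image_of_injOn ?_).symm
    intro x hx y hy hxy
    simp only [Finset.coe_filter, Finset.mem_Icc, Set.mem_ofPred_eq] at hx hy
    exact pt_inj hxy (by omega) (by omega)

/-- Increasing enumeration of `S` by the indices `i < r`. -/
lemma exists_enum (S : Finset ℤ) {r : ℕ} (hS : S.card = r) :
    ∃ g : ℕ → ℤ, (∀ i j, i < j → j < r → g i < g j) ∧ (∀ i, i < r → g i ∈ S) ∧
      ∀ t ∈ S, ∃ i, i < r ∧ g i = t := by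
  refine ⟨fun i => if h : i < r then S.orderEmbOfFin hS ⟨i, h⟩ else 0, ?_, ?_, ?_⟩
  · intro i j hij hj
    simp only [hj, hij.trans hj, dif_pos]
    exact (S.orderEmbOfFin hS).strictMono hij
  · intro i hi
    simp only [hi, dif_pos]
    exact S.orderEmbOfFin_mem hS _
  · intro t ht
    have : t ∈ Set.range (S.orderEmbOfFin hS) := by simpa using ht
    obtain ⟨i, rfl⟩ := this
    exact ⟨i, i.2, by simp⟩

/-- For an `r`-uniform `H`, a copy of `M1r r` is a pair of edges lying in an arc and in its
complement respectively. -/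
lemma hasCopy_iff {r : ℕ} (hr : 1 ≤ r) {H : Finset (Finset (Fin n))}
    (hu : ∀ h ∈ H, h.card = r) :
    HasCopy (M1r r) H ↔
      ∃ e₁ ∈ H, ∃ e₂ ∈ H, ∃ a b : ℤ, InArc e₁ a b ∧ InArc e₂ (b + 1) (a + n - 1) := by
  rw [hasCopy_M1r_iff]
  constructor
  · rintro ⟨f, -, hf, he₁, he₂⟩
    obtain ⟨F, hF, hF', hFf⟩ := lift_of_cyclicSorted (by omega) f hf
    refine ⟨_, he₁, _, he₂, F 0, F (r - 1), ?_, ?_⟩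
    · intro x hx
      obtain ⟨i, hi, rfl⟩ := Finset.mem_image.1 hx
      have hi : (i : ℕ) < r := by simpa using hi
      refine ⟨F i, ?_, ?_, hFf i⟩
      · rcases Nat.eq_zero_or_pos (i : ℕ) with h | h
        · rw [h]
        · exact (hF _ _ h i.2).le
      · rcases Nat.lt_or_ge (i : ℕ) (r - 1) with h | h
        · exact (hF _ _ h (by omega)).le
        · rw [show (i : ℕ) = r - 1 by omega]
    · intro x hx
      obtain ⟨i, hi, rfl⟩ := Finset.mem_image.1 hx
      have hi : r ≤ (i : ℕ) := by simpa using hi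
      have h1 := hF (r - 1) i (by omega) i.2
      have h2 := hF' i i.2
      exact ⟨F i, by omega, by omega, hFf i⟩
  · rintro ⟨e₁, he₁, e₂, he₂, a, b, h₁, h₂⟩
    obtain ⟨x, hx⟩ := Finset.card_pos.1 ((hu e₁ he₁).symm ▸ hr : 0 < e₁.card)
    obtain ⟨y, hy⟩ := Finset.card_pos.1 ((hu e₂ he₂).symm ▸ hr : 0 < e₂.card)
    obtain ⟨t, ht1, ht2, -⟩ := h₁ x hx
    obtain ⟨u, hu1, hu2, -⟩ := h₂ y hy
    obtain ⟨S₁, hS₁, hi₁, hc₁⟩ := h₁.exists_lift (by omega)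
    obtain ⟨S₂, hS₂, hi₂, hc₂⟩ := h₂.exists_lift (by omega)
    obtain ⟨g₁, hg₁, hm₁, hs₁⟩ := exists_enum S₁ (hc₁.trans (hu _ he₁))
    obtain ⟨g₂, hg₂, hm₂, hs₂⟩ := exists_enum S₂ (hc₂.trans (hu _ he₂))
    let F : ℕ → ℤ := fun j => if j < r then g₁ j else g₂ (j - r)
    have hF1 : ∀ i, i < r → F i = g₁ i := fun i hi => if_pos hi
    have hF2 : ∀ i, r ≤ i → F i = g₂ (i - r) := fun i hi => if_neg (by omega)
    have hb1 : ∀ i, i < r → a ≤ F i ∧ F i ≤ b := fun i hi => by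
      rw [hF1 i hi]; exact hS₁ _ (hm₁ i hi)
    have hb2 : ∀ i, r ≤ i → i < 2 * r → b + 1 ≤ F i ∧ F i ≤ a + n - 1 := fun i hi hi' => by
      rw [hF2 i hi]; exact hS₂ _ (hm₂ _ (by omega))
    have hF : ∀ i j, i < j → j < 2 * r → F i < F j := by
      intro i j hij hj
      rcases Nat.lt_or_ge j r with h | h
      · rw [hF1 j h, hF1 i (by omega)]
        exact hg₁ _ _ hij h
      · rcases Nat.lt_or_ge i r with h' | h'
        · have := hb1 i h'
          have := hb2 j h hj
          omega
        · rw [hF2 j h, hF2 i h']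
          exact hg₂ _ _ (by omega) (by omega)
    have hF' : ∀ j, j < 2 * r → a ≤ F j ∧ F j < a + n := by
      intro j hj
      rcases Nat.lt_or_ge j r with h | h
      · have := hb1 j h
        omega
      · have := hb2 j h hj
        omega
    refine ⟨fun i : Fin (2 * r) => pt n (F i), ?_, cyclicSorted_of_lift F hF ?_, ?_, ?_⟩
    · intro i j hij
      have hi := hF' i i.2
      have hj := hF' j j.2
      have hij := pt_inj hij (by omega) (by omega)
      apply Fin.ext
      rcases lt_trichotomy (i : ℕ) j with h | h | h
      · have := hF _ _ h j.2
        omega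
      · exact h
      · have := hF _ _ h i.2
        omega
    · intro j hj
      have h0 := hF' 0 (by omega)
      have := hF' j hj
      omega
    · convert he₁
      rw [← hi₁]
      ext x
      simp only [Finset.mem_image, Finset.mem_filter, Finset.mem_univ, true_and]
      constructor
      · rintro ⟨i, hi, rfl⟩
        exact ⟨F i, by rw [hF1 _ hi]; exact hm₁ _ hi, rfl⟩
      · rintro ⟨t, ht, rfl⟩
        obtain ⟨i, hi, rfl⟩ := hs₁ t ht
        exact ⟨⟨i, by omega⟩, hi, by rw [hF1 _ hi]⟩
    · convert he₂
      rw [← hi₂]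
      ext x
      simp only [Finset.mem_image, Finset.mem_filter, Finset.mem_univ, true_and]
      constructor
      · rintro ⟨i, hi, rfl⟩
        exact ⟨F i, by rw [hF2 _ hi]; exact hm₂ _ (by omega), rfl⟩
      · rintro ⟨t, ht, rfl⟩
        obtain ⟨i, hi, rfl⟩ := hs₂ t ht
        exact ⟨⟨i + r, by omega⟩, by simp, by simp [hF2]⟩

/-! ### Arcs containing an edge of a saturated hypergraph -/

/-- The arc covered by the integer interval `[a, b]` contains an edge of `H`. -/
def Good (H : Finset (Finset (Fin n))) (a b : ℤ) : Prop := ∃ h ∈ H, InArc h a b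

lemma InArc.mono {h : Finset (Fin n)} {a b c d : ℤ} (hh : InArc h a b) (h1 : c ≤ a)
    (h2 : b ≤ d) : InArc h c d := fun x hx => by
  obtain ⟨t, ht1, ht2, ht⟩ := hh x hx
  exact ⟨t, by omega, by omega, ht⟩

lemma InArc.shift {h : Finset (Fin n)} {a b : ℤ} (hh : InArc h a b) (k : ℤ) :
    InArc h (a + n * k) (b + n * k) := fun x hx => by
  obtain ⟨t, ht1, ht2, rfl⟩ := hh x hx
  exact ⟨t + n * k, by omega, by omega, pt_eq_iff.2 ⟨k, rfl⟩⟩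

lemma Good.mono {H : Finset (Finset (Fin n))} {a b c d : ℤ} (hh : Good H a b) (h1 : c ≤ a)
    (h2 : b ≤ d) : Good H c d := by
  obtain ⟨h, hH, hh⟩ := hh
  exact ⟨h, hH, hh.mono h1 h2⟩

lemma Good.shift {H : Finset (Finset (Fin n))} {a b : ℤ} (hh : Good H a b) (k : ℤ) :
    Good H (a + n * k) (b + n * k) := by
  obtain ⟨h, hH, hh⟩ := hh
  exact ⟨h, hH, hh.shift k⟩

/-- Only the empty set lies both in an arc and in its complement. -/
lemma InArc.eq_empty {e : Finset (Fin n)} {a b : ℤ} (h1 : InArc e a b)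
    (h2 : InArc e (b + 1) (a + n - 1)) : e = ∅ := by
  refine Finset.eq_empty_of_forall_notMem fun x hx => ?_
  obtain ⟨t, ht1, ht2, ht⟩ := h1 x hx
  obtain ⟨u, hu1, hu2, hu⟩ := h2 x hx
  have := pt_inj (ht.trans hu.symm) (by omega) (by omega)
  omega

lemma InArc.card_le {e : Finset (Fin n)} {a b : ℤ} (h : InArc e a b) :
    e.card ≤ (b + 1 - a).toNat := by
  rw [← Int.card_Icc]
  refine le_trans (Finset.card_le_card (t := (Finset.Icc a b).image (pt n)) fun x hx => ?_)
    Finset.card_image_le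
  obtain ⟨t, h1, h2, rfl⟩ := h x hx
  exact Finset.mem_image_of_mem _ (Finset.mem_Icc.2 ⟨h1, h2⟩)

lemma inArc_univ (e : Finset (Fin n)) {a b : ℤ} (h : a + n - 1 ≤ b) : InArc e a b :=
  fun x _ => by
    obtain ⟨t, h1, h2, h3⟩ := exists_pt a x
    exact ⟨t, h1, by omega, h3⟩

/-- In a saturated hypergraph, every non-edge is separated from some edge by an arc. -/
lemma exists_sep {r : ℕ} (hr : 2 ≤ r) {H : Finset (Finset (Fin n))} (hH : IsSat (M1r r) r H)
    {e : Finset (Fin n)} (he : e.card = r) (heH : e ∉ H) :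
    ∃ h ∈ H, ∃ c d : ℤ, InArc e c d ∧ InArc h (d + 1) (c + n - 1) := by
  obtain ⟨hu, hno, hsat⟩ := hH
  have hu' : ∀ h ∈ insert e H, h.card = r := by
    intro h hh
    rcases Finset.mem_insert.1 hh with rfl | hh
    · exact he
    · exact hu h hh
  obtain ⟨e₁, h₁, e₂, h₂, a, b, ha, hb⟩ := (hasCopy_iff (by omega) hu').1 (hsat e he heH)
  rcases Finset.mem_insert.1 h₁ with rfl | h₁' <;> rcases Finset.mem_insert.1 h₂ with rfl | h₂'
  · have := ha.eq_empty hb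
    simp [this] at he
    omega
  · exact ⟨e₂, h₂', a, b, ha, hb⟩
  · refine ⟨e₁, h₁', b + 1, a + n - 1, hb, ?_⟩
    convert ha.shift 1 using 1 <;> ring
  · exact absurd ((hasCopy_iff (by omega) hu).2 ⟨_, h₁', _, h₂', a, b, ha, hb⟩) hno

/-- An `r`-set `e` containing both endpoints of `[a, b]` is an edge, unless an edge lies in the
complement of `[a, b]` or in its interior. Indeed an arc containing `e` contains both endpoints,
hence covers `[a, b]` or the complementary arc `[b, a + n]`; an edge separated from `e` then
lies in the complement of `[a, b]` or in its interior, respectively. -/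
lemma mem_of_span {r : ℕ} (hr : 2 ≤ r) {H : Finset (Finset (Fin n))} (hH : IsSat (M1r r) r H)
    {e : Finset (Fin n)} {a b : ℤ} (hab : a < b) (hb : b ≤ a + n - 1)
    (hea : pt n a ∈ e) (heb : pt n b ∈ e) (hc : e.card = r)
    (hg : ¬ Good H (b + 1) (a + n - 1)) (hg' : ¬ Good H (a + 1) (b - 1)) : e ∈ H := by
  by_contra heH
  obtain ⟨h, hh, c, d, hcd, hsep⟩ := exists_sep hr hH hc heH
  have hne : h.Nonempty := Finset.card_pos.1 (by rw [hH.1 h hh]; omega)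
  have hdc : d ≤ c + n - 2 := by
    obtain ⟨x, hx⟩ := hne
    obtain ⟨t, h1, h2, -⟩ := hsep x hx
    omega
  obtain ⟨t, ht1, ht2, ht⟩ := hcd _ hea
  obtain ⟨k, rfl⟩ := pt_eq_iff.1 ht
  obtain ⟨u, hu1, hu2, hu⟩ := hcd _ heb
  obtain ⟨m, rfl⟩ := pt_eq_iff.1 hu
  have hn := n_pos (n := n)
  -- The lifts of `a` and `b` in `[c, d]` are `a + n * k` and `b + n * m`; as `d - c < n`, the
  -- second is either the next lift of `b` after the first, or the one before it.
  have hmk : m = k ∨ m = k - 1 := by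
    have : m < k + 1 := by nlinarith
    have : k - 2 < m := by nlinarith
    omega
  rcases hmk with rfl | rfl
  · refine hg ⟨h, hh, (hsep.shift (-m)).mono ?_ ?_⟩ <;> linarith
  · refine hg' ⟨h, hh, (hsep.shift (-k)).mono ?_ ?_⟩ <;> linarith

/-- An interval with at least `r` points carries an `r`-set containing both its endpoints. -/
lemma exists_span {r : ℕ} (hr : 2 ≤ r) {a b : ℤ} (hab : a < b) (hb : b ≤ a + n - 1)
    (hc : (r : ℤ) ≤ b + 1 - a) :
    ∃ e : Finset (Fin n), InArc e a b ∧ pt n a ∈ e ∧ pt n b ∈ e ∧ e.card = r := by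
  have h1 : ({a, b} : Finset ℤ) ⊆ Finset.Icc a b := by
    intro t ht
    simp only [Finset.mem_insert, Finset.mem_singleton] at ht
    rw [Finset.mem_Icc]
    omega
  obtain ⟨S, hS1, hS2, hS3⟩ := Finset.exists_subsuperset_card_eq h1
    (Finset.card_le_two.trans hr) (by rw [Int.card_Icc]; omega)
  refine ⟨S.image (pt n), ?_, Finset.mem_image_of_mem _ (hS1 (by simp)),
    Finset.mem_image_of_mem _ (hS1 (by simp)), ?_⟩
  · intro x hx
    obtain ⟨t, ht, rfl⟩ := Finset.mem_image.1 hx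
    have := Finset.mem_Icc.1 (hS2 ht)
    exact ⟨t, this.1, this.2, rfl⟩
  · rw [Finset.card_image_of_injOn, hS3]
    intro x hx y hy hxy
    have := Finset.mem_Icc.1 (hS2 hx)
    have := Finset.mem_Icc.1 (hS2 hy)
    exact pt_inj hxy (by omega) (by omega)

lemma sat_nonempty {r : ℕ} (hr : 2 ≤ r) (hn : 2 * r ≤ n) {H : Finset (Finset (Fin n))}
    (hH : IsSat (M1r r) r H) : ∃ h, h ∈ H := by
  obtain ⟨e, -, -, -, he⟩ := exists_span (n := n) hr (a := 0) (b := n - 1) (by omega) (by omega)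
    (by omega)
  by_cases heH : e ∈ H
  · exact ⟨e, heH⟩
  · obtain ⟨h, hh, -⟩ := exists_sep hr hH he heH
    exact ⟨h, hh⟩

/-- An arc containing an edge has at least `r` points. The case `r = 0` is separate because there
the empty edge lies in every interval, including those with `b + 1 < a`. -/
lemma Good.le_length {r : ℕ} {H : Finset (Finset (Fin n))} (hH : IsSat (M1r r) r H) {a b : ℤ}
    (h : Good H a b) : r ≤ b + 1 - a ∨ r = 0 := by
  obtain ⟨e, he, hab⟩ := h
  have := hab.card_le
  rw [hH.1 e he] at this
  omega

lemma good_of_long {r : ℕ} (hr : 2 ≤ r) (hn : 2 * r ≤ n) {H : Finset (Finset (Fin n))}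
    (hH : IsSat (M1r r) r H) {a b : ℤ} (h : r ≤ b + 1 - a)
    (hg : ¬ Good H (b + 1) (a + n - 1)) : Good H a b := by
  by_contra hg'
  obtain ⟨h₀, hh₀⟩ := sat_nonempty hr hn hH
  rcases le_or_gt (a + n - 1) b with hb | hb
  · exact hg' ⟨h₀, hh₀, inArc_univ _ hb⟩
  · obtain ⟨e, he, hea, heb, hc⟩ := exists_span (n := n) hr (a := a) (b := b) (by omega)
      (by omega) (by omega)
    exact hg' ⟨e, mem_of_span hr hH (by omega) hb.le hea heb hc hg
      fun h' => hg' (h'.mono (by omega) (by omega)), he⟩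

/-- Self-duality: of an arc and its complement, exactly one contains an edge. At most one does
because `H` has no copy of `M1r r`; at least one does because `n ≥ 2r` makes one of the two have
at least `r` points, so that `mem_of_span` applies to it. -/
lemma good_dual {r : ℕ} (hr : 2 ≤ r) (hn : 2 * r ≤ n) {H : Finset (Finset (Fin n))}
    (hH : IsSat (M1r r) r H) (a b : ℤ) : Good H a b ↔ ¬ Good H (b + 1) (a + n - 1) := by
  constructor
  · rintro ⟨e, he, h⟩ ⟨e', he', h'⟩
    exact hH.2.1 ((hasCopy_iff (by omega) hH.1).2 ⟨e, he, e', he', a, b, h, h'⟩)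
  · intro h
    rcases le_or_gt (r : ℤ) (b + 1 - a) with hl | hl
    · exact good_of_long hr hn hH hl h
    · by_contra h'
      refine h (good_of_long hr hn hH (by omega) fun h'' => h' ?_)
      have := h''.shift (-1)
      exact this.mono (by linarith) (by linarith)


/-! ### The functions `ρ` and `λ` on lifts -/

lemma subset_arcCC {a b : ℤ} (h1 : a ≤ b) (h2 : b < a + n) (h : Finset (Fin n)) :
    h ⊆ arcCC (pt n a) (pt n b) ↔ InArc h a b :=
  ⟨fun H x hx => (mem_arcCC h1 h2 x).1 (H hx), fun H x hx => (mem_arcCC h1 h2 x).2 (H x hx)⟩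

/-- `R a` is the least right endpoint `b` for which `[a, b]` contains an edge. -/
lemma exists_R {r : ℕ} (hr : 2 ≤ r) (hn : 2 * r ≤ n) {H : Finset (Finset (Fin n))}
    (hH : IsSat (M1r r) r H) : ∃ R : ℤ → ℤ, ∀ a b, Good H a b ↔ R a ≤ b := by
  have : ∀ a, ∃ c, ∀ b, Good H a b ↔ c ≤ b := by
    intro a
    obtain ⟨h₀, hh₀⟩ := sat_nonempty hr hn hH
    obtain ⟨c, hc, hc'⟩ := Int.exists_least_of_bdd (P := fun b => Good H a b)
      ⟨a, fun b hb => by have := hb.le_length hH; omega⟩ ⟨a + n - 1, h₀, hh₀, inArc_univ _ le_rfl⟩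
    exact ⟨c, fun b => ⟨hc' b, fun h => hc.mono le_rfl h⟩⟩
  choose R hR using this
  exact ⟨R, hR⟩

/-- If `[v, b]` contains an edge, it contains one through `v`: in the shortest good interval
`[v, R v]`, any `r`-set through both endpoints is an edge. So requiring the edge to contain the
vertex makes no difference in the definition of `ρ`. -/
lemma edge_left {r : ℕ} (hr : 2 ≤ r) (hn : 2 * r ≤ n) {H : Finset (Finset (Fin n))}
    (hH : IsSat (M1r r) r H) {R : ℤ → ℤ} (hR : ∀ a b, Good H a b ↔ R a ≤ b) {v b : ℤ}
    (h : R v ≤ b) : ∃ e ∈ H, pt n v ∈ e ∧ InArc e v b := by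
  have hg : Good H v (R v) := (hR _ _).2 le_rfl
  have hl := hg.le_length hH
  have hu : R v ≤ v + n - 1 := by
    obtain ⟨h₀, hh₀⟩ := sat_nonempty hr hn hH
    exact (hR _ _).1 ⟨h₀, hh₀, inArc_univ _ le_rfl⟩
  obtain ⟨e, he, hea, heb, hc⟩ := exists_span (n := n) hr (a := v) (b := R v) (by omega) hu
    (by omega)
  refine ⟨e, mem_of_span hr hH (by omega) hu hea heb hc ((good_dual hr hn hH _ _).1 hg) ?_, hea,
    he.mono le_rfl h⟩
  intro h'
  have := (hR v (R v - 1)).1 (h'.mono (by omega) le_rfl)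
  omega

/-- The mirror image of `edge_left`, with `L v` the greatest left endpoint `a` for which `[a, v]`
contains an edge. -/
lemma edge_right {r : ℕ} (hr : 2 ≤ r) (hn : 2 * r ≤ n) {H : Finset (Finset (Fin n))}
    (hH : IsSat (M1r r) r H) {L : ℤ → ℤ} (hL : ∀ a b, Good H a b ↔ a ≤ L b) {a v : ℤ}
    (h : a ≤ L v) : ∃ e ∈ H, pt n v ∈ e ∧ InArc e a v := by
  have hg : Good H (L v) v := (hL _ _).2 le_rfl
  have hl := hg.le_length hH
  have hu : v - n + 1 ≤ L v := by
    obtain ⟨h₀, hh₀⟩ := sat_nonempty hr hn hH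
    exact (hL _ _).1 ⟨h₀, hh₀, inArc_univ _ (by omega)⟩
  obtain ⟨e, he, hea, heb, hc⟩ := exists_span (n := n) hr (a := L v) (b := v) (by omega)
    (by omega) (by omega)
  refine ⟨e, mem_of_span hr hH (by omega) (by omega) hea heb hc
    ((good_dual hr hn hH _ _).1 hg) ?_, heb, he.mono h le_rfl⟩
  intro h'
  have := (hL (L v + 1) v).1 (h'.mono le_rfl (by omega))
  omega

/-- `rhoF` is computed by `R` on lifts; in particular the vertex `ρ(v)` exists and is unique. -/
lemma rhoF_pt {r : ℕ} (hr : 2 ≤ r) (hn : 2 * r ≤ n) {H : Finset (Finset (Fin n))}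
    (hH : IsSat (M1r r) r H) {R : ℤ → ℤ} (hR : ∀ a b, Good H a b ↔ R a ≤ b) (v : ℤ) :
    rhoF H (pt n v) = pt n (R v) := by
  have hl := ((hR v _).2 le_rfl).le_length hH
  have hu : R v ≤ v + n - 1 := by
    obtain ⟨h₀, hh₀⟩ := sat_nonempty hr hn hH
    exact (hR _ _).1 ⟨h₀, hh₀, inArc_univ _ le_rfl⟩
  have key : ∀ b, v ≤ b → b < v + n →
      ((∃ e ∈ H, pt n v ∈ e ∧ e ⊆ arcCC (pt n v) (pt n b)) ↔ R v ≤ b) := by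
    intro b h1 h2
    simp only [subset_arcCC h1 h2]
    exact ⟨fun ⟨e, he, _, h⟩ => (hR _ _).1 ⟨e, he, h⟩, edge_left hr hn hH hR⟩
  have hiff : ∀ j, IsRho H (pt n v) j ↔ j = pt n (R v) := by
    intro j
    obtain ⟨b, hb1, hb2, rfl⟩ := exists_pt v j
    unfold IsRho
    rw [pt_sub_one, key b hb1 hb2]
    -- For `b = v` the arc from `v` to `v - 1` is the whole circle, but `IsRho` already fails
    -- because a single point contains no edge.
    rcases hb1.eq_or_lt with rfl | hb
    · constructor
      · intro h
        omega
      · intro h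
        have := pt_inj h (by omega) (by omega)
        omega
    · rw [key (b - 1) (by omega) (by omega)]
      constructor
      · intro h
        rw [show b = R v by omega]
      · intro h
        have := pt_inj h (by omega) (by omega)
        omega
  have hex : ∃ j, IsRho H (pt n v) j := ⟨_, (hiff _).2 rfl⟩
  rw [rhoF, dif_pos hex]
  exact (hiff _).1 hex.choose_spec

/-- `lamF` is computed by `L` on lifts; in particular the vertex `λ(v)` exists and is unique. -/
lemma lamF_pt {r : ℕ} (hr : 2 ≤ r) (hn : 2 * r ≤ n) {H : Finset (Finset (Fin n))}
    (hH : IsSat (M1r r) r H) {L : ℤ → ℤ} (hL : ∀ a b, Good H a b ↔ a ≤ L b) (v : ℤ) :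
    lamF H (pt n v) = pt n (L v) := by
  have hl := ((hL _ v).2 le_rfl).le_length hH
  have hu : v - n + 1 ≤ L v := by
    obtain ⟨h₀, hh₀⟩ := sat_nonempty hr hn hH
    exact (hL _ _).1 ⟨h₀, hh₀, inArc_univ _ (by omega)⟩
  have key : ∀ a, a ≤ v → v < a + n →
      ((∃ e ∈ H, pt n v ∈ e ∧ e ⊆ arcCC (pt n a) (pt n v)) ↔ a ≤ L v) := by
    intro b h1 h2
    simp only [subset_arcCC h1 h2]
    exact ⟨fun ⟨e, he, _, h⟩ => (hL _ _).1 ⟨e, he, h⟩, edge_right hr hn hH hL⟩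
  have hiff : ∀ j, IsLam H (pt n v) j ↔ j = pt n (L v) := by
    intro j
    obtain ⟨a, ha1, ha2, rfl⟩ := exists_pt (v - n + 1) j
    unfold IsLam
    rw [pt_add_one, key a (by omega) (by omega)]
    rcases (show a ≤ v by omega).eq_or_lt with rfl | ha
    · constructor
      · intro h
        omega
      · intro h
        have := pt_inj h (by omega) (by omega)
        omega
    · rw [key (a + 1) (by omega) (by omega)]
      constructor
      · intro h
        rw [show a = L v by omega]
      · intro h
        have := pt_inj h (by omega) (by omega)
        omega
  have hex : ∃ j, IsLam H (pt n v) j := ⟨_, (hiff _).2 rfl⟩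
  rw [lamF, dif_pos hex]
  exact (hiff _).1 hex.choose_spec

end

/-! ### The tiling by the intervals `[R v, R (v + 1)]` -/

/-- The tiles of `v` and `v'` cannot abut at both ends, modulo `n`, unless one is a single point.
Otherwise `R` would jump only at the residues of `v` and `v'`. By `hadj`, `R` jumps at
`R v'`, which lies in `(v', v + n]`, so `R v' = v + n`; and `hadj` also bounds `R (R v')` by
`v + n`, which contradicts `R (v + n) > v + n`. -/
lemma two_tiles {R : ℤ → ℤ} {n v v' : ℤ} (hper : ∀ a k, R (a + n * k) = R a + n * k)
    (hmono : ∀ a b, a ≤ b → R a ≤ R b) (hlt : ∀ a, a < R a) (hub : ∀ a, R a < a + n)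
    (hadj : ∀ a b, R a ≤ b ↔ a + n ≤ R (b + 1)) (h1 : v < v')
    (e1 : R (v + 1) = R v') (e2 : R (v' + 1) = R v + n) : R v = R (v + 1) ∨ R v' = R (v' + 1) := by
  by_contra! hne
  have p1 := hper v 1
  have m1 := hmono v (v + 1) (by omega)
  have m2 := hmono v' (v' + 1) (by omega)
  have hc1 : R (v + 1) ≤ v + n := by have := hub (v + 1); omega
  have hc2 := hlt v'
  rw [mul_one] at p1
  have j1 : R (R v') < v + 1 + n := by
    by_contra! h
    have := (hadj (v + 1) (R v' - 1)).2 (by simpa using h)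
    omega
  have j2 := (hadj v' (R v')).1 le_rfl
  have hc : R v' = v + n := by
    by_contra hc
    have := hmono (v' + 1) (R v') (by omega)
    have := hmono (R v' + 1) (v + n) (by omega)
    omega
  rw [hc, p1] at j1
  omega

theorem lam_rho_relative (n r : ℕ) [NeZero n] (hr : 2 ≤ r) (hn : 2 * r ≤ n)
    (H : Finset (Finset (Fin n))) (hH : IsSat (M1r r) r H) :
    (∀ v : Fin n, rhoF H (v + 1) = lamF H v) ∧
    (∀ v v' : Fin n, v ≠ v' →
      (arcCC (rhoF H v) (lamF H v) ∩ arcCC (rhoF H v') (lamF H v')).card ≤ 1) ∧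
    (∀ j : Fin n, ∃! i : Fin n,
      j ∈ arcCC (rhoF H i) (lamF H i) ∧ j + 1 ∈ arcCC (rhoF H i) (lamF H i)) ∧
    (∀ v : Fin n, lamF H v ≠ rhoF H v →
      lamF H (rhoF H v) = v ∧ rhoF H (rhoF H v) ∈ arcCC (lamF H v) v \ {v}) := by
  obtain ⟨R, hR⟩ := exists_R hr hn hH
  -- Self-duality expresses the greatest left endpoint through `R`; this is `ρ(v + 1) = λ(v)`.
  have hL : ∀ a b, Good H a b ↔ a ≤ R (b + 1) - n := fun a b => by
    rw [good_dual hr hn hH, hR]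
    omega
  have hrho := rhoF_pt hr hn hH hR
  have hlam : ∀ v, lamF H (pt n v) = pt n (R (v + 1)) := fun v => by
    rw [lamF_pt hr hn hH (L := fun b => R (b + 1) - n) hL, pt_eq_iff]
    exact ⟨-1, by ring⟩
  have hper : ∀ a (k : ℤ), R (a + n * k) = R a + n * k := by
    intro a k
    apply le_antisymm
    · exact (hR _ _).1 (((hR _ _).2 le_rfl).shift k)
    · have := (hR _ _).1 (((hR (a + n * k) _).2 le_rfl).shift (-k))
      rw [show a + n * k + n * -k = a by ring] at this
      linarith
  have hmono : ∀ a b, a ≤ b → R a ≤ R b := fun a b h =>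
    (hR _ _).1 (((hR b _).2 le_rfl).mono h le_rfl)
  have hlt : ∀ a, a < R a := fun a => by
    have := ((hR a _).2 le_rfl).le_length hH
    omega
  have hub : ∀ a, R a < a + n := fun a => by
    obtain ⟨h₀, hh₀⟩ := sat_nonempty hr hn hH
    have := (hR a _).1 ⟨h₀, hh₀, inArc_univ _ le_rfl⟩
    omega
  have hadj : ∀ a b, R a ≤ b ↔ a + n ≤ R (b + 1) := fun a b => by
    rw [← hR, hL]
    omega
  have hmem : ∀ v x, x ∈ arcCC (rhoF H (pt n v)) (lamF H (pt n v)) ↔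
      ∃ t, R v ≤ t ∧ t ≤ R (v + 1) ∧ pt n t = x := fun v x => by
    have h1 := hmono v (v + 1) (by omega)
    have h2 := hlt v
    have h3 := hub (v + 1)
    rw [hrho, hlam, mem_arcCC h1 (by omega)]
  have hlift : ∀ x : Fin n, ∃ t, pt n t = x := fun x => ⟨_, pt_natCast x⟩
  have hone : ∀ v : Fin n, rhoF H (v + 1) = lamF H v := by
    intro v
    obtain ⟨v, rfl⟩ := hlift v
    rw [pt_add_one, hrho, hlam]
  have htwo : ∀ v v' : Fin n, v ≠ v' →
      (arcCC (rhoF H v) (lamF H v) ∩ arcCC (rhoF H v') (lamF H v')).card ≤ 1 := by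
    intro v v' hne
    obtain ⟨v, rfl⟩ := hlift v
    obtain ⟨v', hv1, hv2, rfl⟩ := exists_pt v v'
    have hv : v < v' := hv1.lt_of_ne (by rintro rfl; exact hne rfl)
    have hm1 := hmono (v + 1) v' (by omega)
    have hm2 := hmono (v' + 1) (v + n * 1) (by omega)
    rw [hper] at hm2
    have hm3 := hmono v (v + 1) (by omega)
    have hm4 := hmono v' (v' + 1) (by omega)
    have key : ∀ x, x ∈ arcCC (rhoF H (pt n v)) (lamF H (pt n v)) ∩
        arcCC (rhoF H (pt n v')) (lamF H (pt n v')) →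
        (x = pt n (R v') ∧ R (v + 1) = R v') ∨ (x = pt n (R v) ∧ R (v' + 1) = R v + n) := by
      intro x hx
      rw [Finset.mem_inter, hmem, hmem] at hx
      obtain ⟨⟨t, ht1, ht2, rfl⟩, u, hu1, hu2, hu⟩ := hx
      obtain ⟨k, rfl⟩ := pt_eq_iff.1 hu
      have hk : k = 0 ∨ k = 1 := by
        have h0 := n_pos (n := n)
        have : -1 < k := by nlinarith
        have : k < 2 := by nlinarith
        omega
      rcases hk with rfl | rfl
      · left
        rw [show t = R v' by omega]
        exact ⟨rfl, by omega⟩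
      · right
        rw [show t = R v by omega]
        exact ⟨rfl, by omega⟩
    rw [Finset.card_le_one]
    intro x hx y hy
    have hxy : R (v + 1) = R v' → R (v' + 1) = R v + n → pt n (R v') = pt n (R v) := by
      intro e1 e2
      rcases two_tiles hper hmono hlt hub hadj hv e1 e2 with h | h
      · rw [h, e1]
      · rw [h, e2, pt_eq_iff]
        exact ⟨1, by ring⟩
    rcases key x hx with ⟨rfl, h1⟩ | ⟨rfl, h1⟩ <;> rcases key y hy with ⟨rfl, h2⟩ | ⟨rfl, h2⟩
    · rfl
    · exact hxy h1 h2
    · exact (hxy h2 h1).symm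
    · rfl
  refine ⟨hone, htwo, ?_, ?_⟩
  · intro j
    obtain ⟨j, rfl⟩ := hlift j
    rw [pt_add_one]
    have hj : pt n j ≠ pt n (j + 1) := fun h => by
      have := pt_inj h (by omega) (by omega)
      omega
    -- The tile containing `[j, j + 1]` is that of the greatest `i` with `R i ≤ j`; uniqueness
    -- follows from the bound on intersections, as `j` and `j + 1` are distinct points.
    obtain ⟨i, hi, hi'⟩ := Int.exists_greatest_of_bdd (P := fun i => R i ≤ j)
      ⟨j, fun i hi => by have := hlt i; omega⟩ ⟨j - n, by have := hub (j - n); omega⟩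
    have hi2 : j < R (i + 1) := by
      by_contra! h
      have := hi' _ h
      omega
    have hmi : pt n j ∈ arcCC (rhoF H (pt n i)) (lamF H (pt n i)) ∧
        pt n (j + 1) ∈ arcCC (rhoF H (pt n i)) (lamF H (pt n i)) := by
      rw [hmem, hmem]
      exact ⟨⟨j, hi, by omega, rfl⟩, j + 1, by omega, by omega, rfl⟩
    refine ⟨pt n i, hmi, fun i' hi' => ?_⟩
    by_contra hne
    exact hj (Finset.card_le_one.1 (htwo _ _ hne) _ (Finset.mem_inter.2 ⟨hi'.1, hmi.1⟩) _
      (Finset.mem_inter.2 ⟨hi'.2, hmi.2⟩))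
  · intro v hv
    obtain ⟨v, rfl⟩ := hlift v
    rw [hlam, hrho] at hv
    have hjump : R v < R (v + 1) :=
      (hmono v (v + 1) (by omega)).lt_of_ne fun h => hv (by rw [h])
    have h1 := (hadj v (R v)).1 le_rfl
    have h2 : R (R v + 1) < v + 1 + n := by
      by_contra! h
      have := (hadj (v + 1) (R v)).2 h
      omega
    constructor
    · rw [hrho, hlam, pt_eq_iff]
      exact ⟨1, by omega⟩
    · have h3 : R (R v) < v + n := by
        by_contra! h
        have := (hadj v (R v - 1)).2 (by simpa using h)
        omega
      have h4 := hmono (v + 1) (R v) (hlt v)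
      have h5 := hlt (v + 1)
      rw [hrho, hrho, hlam, Finset.mem_sdiff, Finset.mem_singleton]
      have hvn : pt n v = pt n (v + n) := pt_eq_iff.2 ⟨-1, by ring⟩
      rw [hvn]
      constructor
      · rw [mem_arcCC (by omega) (by omega)]
        exact ⟨_, h4, by omega, rfl⟩
      · intro h
        have := pt_inj h (by omega) (by omega)
        omega
end

section
/- Let r ≥ 2 and let C = (w_1, …, w_{2ℓ+1}) be a semi-valid tuple in Ω_n that is (i,k)-consecutive for some i and some k with 1 ≤ k ≤ ℓ. If each of the tuples C_{i,k,−1}, C_{i,k,0} = C, and C_{i,k,1} is semi-valid, then |H_n^{(r)}(C)| ≥ min{ |H_n^{(r)}(C_{i,k,−1})|, |H_n^{(r)}(C_{i,k,1})| }. Moreover, this inequality is strict if r ≥ 3 and n ≥ 3r − 5. -/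
/-!
The proof shows `2|H(C)| ≥ |H(C_{i,k,-1})| + |H(C_{i,k,1})|` by two injections, abbreviating
`C₋ = C_{i,k,-1}` and `C₊ = C_{i,k,1}`.

List the entries of `C` in cyclic order as `u_0, …, u_{2ℓ}`, beginning with the block
`u_0, …, u_{k-1}`. The arcs `[w_p, w_{p-1}]` are then exactly the arcs `[u_t, u_{t+ℓ}]`. Let
`e ∈ H(C₋) \ H(C)`. Advancing the block only shrinks arcs at their left ends, so for some `s < k`
the set `e` contains the point just before `u_s` and misses `[u_s, u_{s+ℓ}]`. As `e` meets the next
arc of `C₋`, it has a point in `(u_{s+ℓ}, u_{s+ℓ+1}]`. Replacing the point just before `u_s` by `u_s`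
therefore gives a set in `H(C) \ H(C₊)`, and `s` can be read off the result, so this is an injection
(`card_left`). In the same way, replacing the point just after `u_s` by `u_s` gives an injection
from `H(C₊) \ H(C)` to `H(C) \ H(C₋)` (`card_right`). Adding the two bounds gives the inequality.

It is strict once one injection is not surjective. A set containing `u_0` and the point before it,
missing the rest of the arc up to `u_ℓ`, and containing `u_{ℓ+1}` is not an image under the first;
it exists if there are at least `r-2` points after `u_ℓ` and before the block's predecessor. The
mirror image of this set is not an image under the second. If there is room for neither set, then
`n ≤ 2r-3`, which is impossible for `r ≥ 3` and `n ≥ 3r-5`.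

All this is done in a linear model (`linFam`): the circle is cut open just before the block, and
points become numbers `0, …, n-1` with the block of `C` at `1, …, k`. The translation is `card_HnC`.
-/

open Finset

/-! ### The linear model -/

/-- The linear model of `H_n^{(r)}(C)`: the circle is cut open so that its points are
`0, …, n-1`, and `g 0 < g 1 < ⋯ < g (2ℓ)` are the positions of the entries of `C` in their
cyclic order. The arcs starting at `g t` with `t ≤ ℓ` become intervals `[g t, g (t+ℓ)]`; the
remaining ones pass through the cut and run from `g (t+ℓ+1)` round to `g t`, for `t < ℓ`. -/
def linFam (n r ℓ : ℕ) (g : ℕ → ℕ) : Finset (Finset ℕ) :=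
  (powersetCard r (range n)).filter fun e =>
    (∀ t ≤ ℓ, ∃ x ∈ e, g t ≤ x ∧ x ≤ g (t + ℓ)) ∧
    ∀ t < ℓ, ∃ x ∈ e, x ≤ g t ∨ g (t + ℓ + 1) ≤ x

/-- The sequence `g` with its first `k` entries replaced by the block `m, m+1, …, m+k-1`. -/
def blk (k : ℕ) (g : ℕ → ℕ) (m t : ℕ) : ℕ := if t < k then t + m else g t

lemma mem_linFam {n r ℓ : ℕ} {g : ℕ → ℕ} {e : Finset ℕ} : e ∈ linFam n r ℓ g ↔
    ((∀ x ∈ e, x < n) ∧ e.card = r) ∧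
    (∀ t ≤ ℓ, ∃ x ∈ e, g t ≤ x ∧ x ≤ g (t + ℓ)) ∧
    ∀ t < ℓ, ∃ x ∈ e, x ≤ g t ∨ g (t + ℓ + 1) ≤ x := by
  simp only [linFam, mem_filter, mem_powersetCard, subset_iff, mem_range]

/-- Since `k ≤ ℓ`, no arc has both ends in the block, so only the arcs beginning in the block and
those ending in the block depend on its position `m`. -/
lemma mem_linFam_blk {n r ℓ k : ℕ} {g : ℕ → ℕ} (hk2 : k ≤ ℓ) {m : ℕ} {e : Finset ℕ} :
    e ∈ linFam n r ℓ (blk k g m) ↔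
    ((∀ x ∈ e, x < n) ∧ e.card = r) ∧
    (∀ t < k, ∃ x ∈ e, t + m ≤ x ∧ x ≤ g (t + ℓ)) ∧
    (∀ t, k ≤ t → t ≤ ℓ → ∃ x ∈ e, g t ≤ x ∧ x ≤ g (t + ℓ)) ∧
    (∀ t < k, ∃ x ∈ e, x ≤ t + m ∨ g (t + ℓ + 1) ≤ x) ∧
    ∀ t, k ≤ t → t < ℓ → ∃ x ∈ e, x ≤ g t ∨ g (t + ℓ + 1) ≤ x := by
  have lo : ∀ {t}, t < k → blk k g m t = t + m := fun h => if_pos h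
  have hi : ∀ {t}, k ≤ t → blk k g m t = g t := fun h => if_neg (by omega)
  rw [mem_linFam]
  refine and_congr_right fun _ => ⟨fun ⟨h1, h2⟩ => ⟨fun t ht => ?_, fun t ht ht' => ?_,
    fun t ht => ?_, fun t ht ht' => ?_⟩, fun ⟨h1, h2, h3, h4⟩ => ⟨fun t ht => ?_, fun t ht => ?_⟩⟩
  · simpa only [lo ht, hi (show k ≤ t + ℓ by omega)] using h1 t (by omega)
  · simpa only [hi ht, hi (show k ≤ t + ℓ by omega)] using h1 t ht'
  · simpa only [lo ht, hi (show k ≤ t + ℓ + 1 by omega)] using h2 t (by omega)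
  · simpa only [hi ht, hi (show k ≤ t + ℓ + 1 by omega)] using h2 t ht'
  · rw [hi (show k ≤ t + ℓ by omega)]
    by_cases h : t < k
    · simpa only [lo h] using h1 t h
    · simpa only [hi (not_lt.1 h)] using h2 t (not_lt.1 h) ht
  · rw [hi (show k ≤ t + ℓ + 1 by omega)]
    by_cases h : t < k
    · simpa only [lo h] using h3 t h
    · simpa only [hi (not_lt.1 h)] using h4 t (not_lt.1 h) ht

/-- The tail `g k, …, g (2ℓ)` of a linearised tuple whose first `k` entries form a block that can
be placed at `0`, `1` or `2`: the tail is increasing and stays clear of all three blocks. -/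
structure Tail (n ℓ k : ℕ) (g : ℕ → ℕ) : Prop where
  one_le : 1 ≤ k
  le : k ≤ ℓ
  mono : ∀ s t, k ≤ s → s ≤ t → t ≤ 2 * ℓ → g s ≤ g t
  strict : g ℓ < g (ℓ + 1)
  clear : k + 2 ≤ g k
  bound : g (2 * ℓ) < n

/-! ### The exchange injections -/

/-- The exchange behind `card_left`: `f` arises from `e` by moving the point `s` to `s+1`, where
no point of `e` lies in the arc `[s+1, g (s+ℓ)]`. -/
def MoveR (ℓ k : ℕ) (g : ℕ → ℕ) (e f : Finset ℕ) : Prop :=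
  ∃ s < k, s ∈ e ∧ (∀ x ∈ e, ¬(s + 1 ≤ x ∧ x ≤ g (s + ℓ))) ∧ f = insert (s + 1) (e.erase s)

/-- The exchange behind `card_right`: `f` arises from `e` by moving the point `s+2` to `s+1`,
where no point of `e` lies in the arc from `g (s+ℓ+1)` round to `s+1`. -/
def MoveL (ℓ k : ℕ) (g : ℕ → ℕ) (e f : Finset ℕ) : Prop :=
  ∃ s < k, s + 2 ∈ e ∧ (∀ x ∈ e, ¬(x ≤ s + 1 ∨ g (s + ℓ + 1) ≤ x)) ∧
    f = insert (s + 1) (e.erase (s + 2))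

section Linear

variable {n r ℓ k : ℕ} {g : ℕ → ℕ}

/-- A set containing the block entry `s+1` and a point between the entries `g (s+ℓ)` and
`g (s+ℓ+1)` opposite to it meets every arc of the middle tuple: each arc contains either `s+1` or
the whole stretch between these opposite entries. -/
lemma mem_middle (T : Tail n ℓ k g) {f : Finset ℕ} (hb : ∀ x ∈ f, x < n) (hc : f.card = r)
    {s z : ℕ} (hs : s < k) (hsf : s + 1 ∈ f) (hz : z ∈ f) (h1 : g (s + ℓ) ≤ z)
    (h2 : z ≤ g (s + ℓ + 1)) : f ∈ linFam n r ℓ (blk k g 1) := by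
  have hk := T.le
  have hcl := T.clear
  rw [mem_linFam_blk T.le]
  refine ⟨⟨hb, hc⟩, fun t ht => ?_, fun t ht ht' => ?_, fun t ht => ?_, fun t ht ht' => ?_⟩
  · by_cases h : t ≤ s
    · have := T.mono k (t + ℓ) le_rfl (by omega) (by omega)
      exact ⟨s + 1, hsf, by omega, by omega⟩
    · have := T.mono k (s + ℓ) le_rfl (by omega) (by omega)
      have := T.mono (s + ℓ + 1) (t + ℓ) (by omega) (by omega) (by omega)
      exact ⟨z, hz, by omega, by omega⟩
  · have := T.mono t (s + ℓ) (by omega) (by omega) (by omega)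
    have := T.mono (s + ℓ + 1) (t + ℓ) (by omega) (by omega) (by omega)
    exact ⟨z, hz, by omega, by omega⟩
  · by_cases h : s ≤ t
    · exact ⟨s + 1, hsf, by omega⟩
    · have := T.mono (t + ℓ + 1) (s + ℓ) (by omega) (by omega) (by omega)
      exact ⟨z, hz, by omega⟩
  · have := T.mono k t (by omega) (by omega) (by omega)
    exact ⟨s + 1, hsf, by omega⟩

lemma moveR_exists (T : Tail n ℓ k g) {e : Finset ℕ}
    (he : e ∈ linFam n r ℓ (blk k g 0) \ linFam n r ℓ (blk k g 1)) :
    ∃ f ∈ linFam n r ℓ (blk k g 1) \ linFam n r ℓ (blk k g 2), MoveR ℓ k g e f := by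
  have hk := T.le
  have hcl := T.clear
  rw [mem_sdiff, mem_linFam_blk T.le, mem_linFam_blk T.le] at he
  obtain ⟨⟨⟨hb, hc⟩, h1, h2, h3, h4⟩, hne⟩ := he
  -- Advancing the block shrinks only the arcs beginning in it.
  obtain ⟨s, hs, hmiss⟩ : ∃ s < k, ∀ x ∈ e, ¬(s + 1 ≤ x ∧ x ≤ g (s + ℓ)) := by
    by_contra! hcon
    refine hne ⟨⟨hb, hc⟩, hcon, h2, fun t ht => ?_, h4⟩
    obtain ⟨x, hx, hx'⟩ := h3 t ht
    exact ⟨x, hx, by omega⟩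
  have hse : s ∈ e := by
    obtain ⟨x, hx, hx'⟩ := h1 s hs
    have := hmiss x hx
    obtain rfl : x = s := by omega
    exact hx
  have hkl := T.mono k (s + ℓ) (by omega) (by omega) (by omega)
  have hs1 : s + 1 ∉ e := fun h => hmiss _ h ⟨le_rfl, by omega⟩
  -- The arc beginning one entry later forces a point of `e` into `(g (s+ℓ), g (s+ℓ+1)]`.
  obtain ⟨z, hz, hz1, hz2⟩ : ∃ z ∈ e, g (s + ℓ) < z ∧ z ≤ g (s + ℓ + 1) := by
    by_cases h : s + 1 < k
    · obtain ⟨x, hx, hx'⟩ := h1 (s + 1) h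
      rw [show s + 1 + ℓ = s + ℓ + 1 by omega] at hx'
      have := hmiss x hx
      exact ⟨x, hx, by omega, by omega⟩
    · obtain ⟨x, hx, hx'⟩ := h2 (s + 1) (by omega) (by omega)
      rw [show s + 1 + ℓ = s + ℓ + 1 by omega] at hx'
      have := hmiss x hx
      have := T.mono k (s + 1) (by omega) (by omega) (by omega)
      exact ⟨x, hx, by omega, by omega⟩
  have hbd := T.mono (s + ℓ) (2 * ℓ) (by omega) (by omega) (by omega)
  have hbn := T.bound
  refine ⟨insert (s + 1) (e.erase s), ?_, s, hs, hse, hmiss, rfl⟩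
  rw [mem_sdiff]
  constructor
  · refine mem_middle T ?_ ?_ hs (mem_insert_self _ _)
      (mem_insert_of_mem (mem_erase.2 ⟨by omega, hz⟩)) hz1.le hz2
    · intro x hx
      rcases mem_insert.1 hx with rfl | hx
      · omega
      · exact hb x (mem_of_mem_erase hx)
    · rw [card_insert_of_notMem (by simp [hs1]), card_erase_add_one hse, hc]
  · rw [mem_linFam_blk T.le]
    rintro ⟨-, h, -⟩
    obtain ⟨x, hx, hx'⟩ := h s hs
    rcases mem_insert.1 hx with rfl | hx
    · omega
    · exact hmiss x (mem_of_mem_erase hx) (by omega)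

lemma moveR_inj (T : Tail n ℓ k g) {e e' f : Finset ℕ} (h : MoveR ℓ k g e f)
    (h' : MoveR ℓ k g e' f) : e = e' := by
  have hk := T.le
  have hcl := T.clear
  -- `s+1` is the last point of `f` in the block, which determines `s`.
  have key : ∀ {e e' f : Finset ℕ} {s s' : ℕ}, s < k → s' < k →
      (∀ x ∈ e, ¬(s + 1 ≤ x ∧ x ≤ g (s + ℓ))) →
      f = insert (s + 1) (e.erase s) → f = insert (s' + 1) (e'.erase s') → s' ≤ s := by
    intro e e' f s s' hs hs' hm hf hf'
    by_contra hlt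
    have hmem : s' + 1 ∈ insert (s + 1) (e.erase s) := hf ▸ hf' ▸ mem_insert_self _ _
    have := T.mono k (s + ℓ) (by omega) (by omega) (by omega)
    rcases mem_insert.1 hmem with h | h
    · omega
    · exact hm _ (mem_of_mem_erase h) (by omega)
  obtain ⟨s, hs, hse, hm, hf⟩ := h
  obtain ⟨s', hs', hse₂, hm', hf'⟩ := h'
  obtain rfl : s = s' := le_antisymm (key hs' hs hm' hf' hf) (key hs hs' hm hf hf')
  have hkl := T.mono k (s + ℓ) (by omega) (by omega) (by omega)
  have h1 : s + 1 ∉ e.erase s := fun h => hm _ (mem_of_mem_erase h) (by omega)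
  have h1' : s + 1 ∉ e'.erase s := fun h => hm' _ (mem_of_mem_erase h) (by omega)
  rw [← insert_erase hse, ← erase_insert h1, ← hf, hf', erase_insert h1', insert_erase hse₂]

lemma moveL_exists (T : Tail n ℓ k g) {e : Finset ℕ}
    (he : e ∈ linFam n r ℓ (blk k g 2) \ linFam n r ℓ (blk k g 1)) :
    ∃ f ∈ linFam n r ℓ (blk k g 1) \ linFam n r ℓ (blk k g 0), MoveL ℓ k g e f := by
  have hk := T.le
  have hcl := T.clear
  rw [mem_sdiff, mem_linFam_blk T.le, mem_linFam_blk T.le] at he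
  obtain ⟨⟨⟨hb, hc⟩, h1, h2, h3, h4⟩, hne⟩ := he
  -- Moving the block back shrinks only the arcs ending in it.
  obtain ⟨s, hs, hmiss⟩ : ∃ s < k, ∀ x ∈ e, ¬(x ≤ s + 1 ∨ g (s + ℓ + 1) ≤ x) := by
    by_contra! hcon
    refine hne ⟨⟨hb, hc⟩, fun t ht => ?_, h2, hcon, h4⟩
    obtain ⟨x, hx, hx'⟩ := h1 t ht
    exact ⟨x, hx, by omega⟩
  have hse : s + 2 ∈ e := by
    obtain ⟨x, hx, hx'⟩ := h3 s hs
    have := hmiss x hx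
    obtain rfl : x = s + 2 := by omega
    exact hx
  have hkl := T.mono k (s + ℓ) (by omega) (by omega) (by omega)
  have hs1 : s + 1 ∉ e := fun h => hmiss _ h (by omega)
  -- The arc ending one entry earlier forces a point of `e` into `[g (s+ℓ), g (s+ℓ+1))`.
  obtain ⟨z, hz, hz1, hz2⟩ : ∃ z ∈ e, g (s + ℓ) ≤ z ∧ z < g (s + ℓ + 1) := by
    rcases s with _ | s
    · obtain ⟨x, hx, hx'⟩ := h2 ℓ hk le_rfl
      have := hmiss x hx
      simp only [Nat.zero_add] at this ⊢
      exact ⟨x, hx, by omega, by omega⟩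
    · obtain ⟨x, hx, hx'⟩ := h3 s (by omega)
      have := hmiss x hx
      rw [show s + ℓ + 1 = s + 1 + ℓ by omega] at hx'
      exact ⟨x, hx, by omega, by omega⟩
  have hbd := T.mono (s + ℓ) (2 * ℓ) (by omega) (by omega) (by omega)
  have hbn := T.bound
  refine ⟨insert (s + 1) (e.erase (s + 2)), ?_, s, hs, hse, hmiss, rfl⟩
  rw [mem_sdiff]
  constructor
  · refine mem_middle T ?_ ?_ hs (mem_insert_self _ _)
      (mem_insert_of_mem (mem_erase.2 ⟨by omega, hz⟩)) hz1 hz2.le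
    · intro x hx
      rcases mem_insert.1 hx with rfl | hx
      · omega
      · exact hb x (mem_of_mem_erase hx)
    · rw [card_insert_of_notMem (by simp [hs1]), card_erase_add_one hse, hc]
  · rw [mem_linFam_blk T.le]
    rintro ⟨-, -, -, h, -⟩
    obtain ⟨x, hx, hx'⟩ := h s hs
    rcases mem_insert.1 hx with rfl | hx
    · have := T.mono (s + ℓ) (s + ℓ + 1) (by omega) (by omega) (by omega)
      omega
    · exact hmiss x (mem_of_mem_erase hx) (by omega)

lemma moveL_inj {e d f : Finset ℕ} (h : MoveL ℓ k g e f) (h' : MoveL ℓ k g d f) : e = d := by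
  -- `s+1` is the least point of `f`, which determines `s`.
  have key : ∀ {e e' f : Finset ℕ} {s s' : ℕ},
      (∀ x ∈ e, ¬(x ≤ s + 1 ∨ g (s + ℓ + 1) ≤ x)) →
      f = insert (s + 1) (e.erase (s + 2)) → f = insert (s' + 1) (e'.erase (s' + 2)) →
      s ≤ s' := by
    intro e e' f s s' hm hf hf'
    by_contra hlt
    have hmem : s' + 1 ∈ insert (s + 1) (e.erase (s + 2)) := hf ▸ hf' ▸ mem_insert_self _ _
    rcases mem_insert.1 hmem with h | h
    · omega
    · exact hm _ (mem_of_mem_erase h) (by omega)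
  obtain ⟨s, hs, hse, hm, hf⟩ := h
  obtain ⟨s', hs', hse₂, hm', hf'⟩ := h'
  obtain rfl : s = s' := le_antisymm (key hm hf hf') (key hm' hf' hf)
  have h1 : s + 1 ∉ e.erase (s + 2) := fun h => hm _ (mem_of_mem_erase h) (by omega)
  have h1' : s + 1 ∉ d.erase (s + 2) := fun h => hm' _ (mem_of_mem_erase h) (by omega)
  rw [← insert_erase hse, ← erase_insert h1, ← hf, hf', erase_insert h1', insert_erase hse₂]

/-! ### Comparing cardinalities -/

lemma card_left (T : Tail n ℓ k g) :
    (linFam n r ℓ (blk k g 0) \ linFam n r ℓ (blk k g 1)).card ≤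
      (linFam n r ℓ (blk k g 1) \ linFam n r ℓ (blk k g 2)).card :=
  card_le_card_of_forall_subsingleton (MoveR ℓ k g) (fun _ he => moveR_exists T he)
    fun _ _ _ ha _ hb => moveR_inj T ha.2 hb.2

lemma card_right (T : Tail n ℓ k g) :
    (linFam n r ℓ (blk k g 2) \ linFam n r ℓ (blk k g 1)).card ≤
      (linFam n r ℓ (blk k g 1) \ linFam n r ℓ (blk k g 0)).card :=
  card_le_card_of_forall_subsingleton (MoveL ℓ k g) (fun _ he => moveL_exists T he)
    fun _ _ _ ha _ hb => moveL_inj ha.2 hb.2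

/-- A set containing `0` and `1` but no other point up to `g ℓ`, and containing `g (ℓ+1)`, is lost
when the block advances, yet no set can be turned into it by `MoveR`. -/
lemma card_left_lt (T : Tail n ℓ k g) (hr : 3 ≤ r) (hroom : g ℓ + r ≤ n + 1) :
    (linFam n r ℓ (blk k g 0) \ linFam n r ℓ (blk k g 1)).card <
      (linFam n r ℓ (blk k g 1) \ linFam n r ℓ (blk k g 2)).card := by
  have hk := T.le
  have hk1 := T.one_le
  have hcl := T.clear
  have hbn := T.bound
  have hst := T.strict
  have hkl := T.mono k ℓ (by omega) (by omega) (by omega)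
  have hbd := T.mono (ℓ + 1) (2 * ℓ) (by omega) (by omega) (by omega)
  obtain ⟨u, hu1, hu2, hu3⟩ := exists_subsuperset_card_eq
    (s := {g (ℓ + 1)}) (t := Ico (g ℓ + 1) n) (n := r - 2)
    (by simp only [singleton_subset_iff, mem_Ico]; omega) (by rw [card_singleton]; omega)
    (by rw [Nat.card_Ico]; omega)
  have hu : ∀ x ∈ u, g ℓ + 1 ≤ x ∧ x < n := fun x hx => mem_Ico.1 (hu2 hx)
  have hf : insert 0 (insert 1 u) ∈ linFam n r ℓ (blk k g 1) \ linFam n r ℓ (blk k g 2) := by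
    rw [mem_sdiff]
    constructor
    · refine mem_middle T ?_ ?_ (s := 0) (z := g (ℓ + 1)) (by omega) (by simp)
        (by simp [singleton_subset_iff.1 hu1]) (by rw [Nat.zero_add]; omega) (by rw [Nat.zero_add])
      · intro x hx
        simp only [mem_insert] at hx
        rcases hx with rfl | rfl | hx
        · omega
        · omega
        · exact (hu x hx).2
      · have h1 : 1 ∉ u := fun h => by have := hu _ h; omega
        have h0 : 0 ∉ insert 1 u := fun h => by
          rcases mem_insert.1 h with h | h
          · omega
          · have := hu _ h; omega
        rw [card_insert_of_notMem h0, card_insert_of_notMem h1, hu3]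
        omega
    · rw [mem_linFam_blk T.le]
      rintro ⟨-, h, -⟩
      obtain ⟨x, hx, hx'⟩ := h 0 (by omega)
      rw [Nat.zero_add, Nat.zero_add] at hx'
      simp only [mem_insert] at hx
      rcases hx with rfl | rfl | hx
      · omega
      · omega
      · have := hu x hx; omega
  refine lt_of_le_of_lt (card_le_card_of_forall_subsingleton (MoveR ℓ k g)
    (t := (linFam n r ℓ (blk k g 1) \ linFam n r ℓ (blk k g 2)).erase (insert 0 (insert 1 u)))
    (fun e he => ?_) fun _ _ _ ha _ hb => moveR_inj T ha.2 hb.2) (card_erase_lt_of_mem hf)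
  obtain ⟨f, hf, hm⟩ := moveR_exists T he
  refine ⟨f, mem_erase.2 ⟨?_, hf⟩, hm⟩
  rintro rfl
  obtain ⟨s, hs, hse, -, heq⟩ := hm
  have h1 : s + 1 ∈ insert 0 (insert 1 u) := heq ▸ mem_insert_self _ _
  have h0 : 0 ∈ insert (s + 1) (e.erase s) := heq ▸ mem_insert_self _ _
  simp only [mem_insert, mem_erase] at h1 h0
  rcases h1 with h | h | h
  · omega
  · omega
  · have := hu _ h; omega

/-- A set containing `1` and `2`, not `0`, and otherwise only points below `g (ℓ+1)`, among them
`g ℓ`, is lost when the block moves back, yet no set can be turned into it by `MoveL`. -/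
lemma card_right_lt (T : Tail n ℓ k g) (hr : 3 ≤ r) (hroom : r + 1 ≤ g (ℓ + 1)) :
    (linFam n r ℓ (blk k g 2) \ linFam n r ℓ (blk k g 1)).card <
      (linFam n r ℓ (blk k g 1) \ linFam n r ℓ (blk k g 0)).card := by
  have hk := T.le
  have hk1 := T.one_le
  have hcl := T.clear
  have hbn := T.bound
  have hst := T.strict
  have hkl := T.mono k ℓ (by omega) (by omega) (by omega)
  have hbd := T.mono (ℓ + 1) (2 * ℓ) (by omega) (by omega) (by omega)
  obtain ⟨u, hu1, hu2, hu3⟩ := exists_subsuperset_card_eq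
    (s := {g ℓ}) (t := Ico 3 (g (ℓ + 1))) (n := r - 2)
    (by simp only [singleton_subset_iff, mem_Ico]; omega) (by rw [card_singleton]; omega)
    (by rw [Nat.card_Ico]; omega)
  have hu : ∀ x ∈ u, 3 ≤ x ∧ x < g (ℓ + 1) := fun x hx => mem_Ico.1 (hu2 hx)
  have hf : insert 2 (insert 1 u) ∈ linFam n r ℓ (blk k g 1) \ linFam n r ℓ (blk k g 0) := by
    rw [mem_sdiff]
    constructor
    · refine mem_middle T ?_ ?_ (s := 0) (z := g ℓ) (by omega) (by simp)
        (by simp [singleton_subset_iff.1 hu1]) (by rw [Nat.zero_add]) (by rw [Nat.zero_add]; omega)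
      · intro x hx
        simp only [mem_insert] at hx
        rcases hx with rfl | rfl | hx
        · omega
        · omega
        · have := hu x hx; omega
      · have h1 : 1 ∉ u := fun h => by have := hu _ h; omega
        have h0 : 2 ∉ insert 1 u := fun h => by
          rcases mem_insert.1 h with h | h
          · omega
          · have := hu _ h; omega
        rw [card_insert_of_notMem h0, card_insert_of_notMem h1, hu3]
        omega
    · rw [mem_linFam_blk T.le]
      rintro ⟨-, -, -, h, -⟩
      obtain ⟨x, hx, hx'⟩ := h 0 (by omega)
      rw [Nat.zero_add, Nat.zero_add] at hx'
      simp only [mem_insert] at hx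
      rcases hx with rfl | rfl | hx
      · omega
      · omega
      · have := hu x hx; omega
  refine lt_of_le_of_lt (card_le_card_of_forall_subsingleton (MoveL ℓ k g)
    (t := (linFam n r ℓ (blk k g 1) \ linFam n r ℓ (blk k g 0)).erase (insert 2 (insert 1 u)))
    (fun e he => ?_) fun _ _ _ ha _ hb => moveL_inj ha.2 hb.2) (card_erase_lt_of_mem hf)
  obtain ⟨f, hf, hm⟩ := moveL_exists T he
  refine ⟨f, mem_erase.2 ⟨?_, hf⟩, hm⟩
  rintro rfl
  obtain ⟨s, hs, hse, hmiss, heq⟩ := hm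
  have h1 : 1 ∈ insert (s + 1) (e.erase (s + 2)) := heq ▸ by simp
  have h2 : 2 ∈ insert (s + 1) (e.erase (s + 2)) := heq ▸ by simp
  simp only [mem_insert, mem_erase] at h1 h2
  rcases h1 with h | h
  · omega
  · exact hmiss _ h.2 (by omega)

/-- The inequality in the linear model: the two bounds on differences say that
`2|H(C)| ≥ |H(C_{-1})| + |H(C_{1})|`, and if neither strictness criterion applied then
`n ≤ 2r - 3`, contradicting `n ≥ 3r - 5`. -/
lemma linear_move (T : Tail n ℓ k g) :
    min (linFam n r ℓ (blk k g 0)).card (linFam n r ℓ (blk k g 2)).card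
        ≤ (linFam n r ℓ (blk k g 1)).card ∧
    (3 ≤ r → 3 * r - 5 ≤ n →
      min (linFam n r ℓ (blk k g 0)).card (linFam n r ℓ (blk k g 2)).card
        < (linFam n r ℓ (blk k g 1)).card) := by
  have e1 := card_sdiff_add_card (linFam n r ℓ (blk k g 0)) (linFam n r ℓ (blk k g 1))
  have e2 := card_sdiff_add_card (linFam n r ℓ (blk k g 1)) (linFam n r ℓ (blk k g 0))
  have e3 := card_sdiff_add_card (linFam n r ℓ (blk k g 2)) (linFam n r ℓ (blk k g 1))
  have e4 := card_sdiff_add_card (linFam n r ℓ (blk k g 1)) (linFam n r ℓ (blk k g 2))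
  rw [union_comm] at e2 e4
  have hl := card_left (r := r) T
  have hrr := card_right (r := r) T
  have hst := T.strict
  refine ⟨by omega, fun hr hn => ?_⟩
  by_cases h : g ℓ + r ≤ n + 1
  · have := card_left_lt T hr h
    omega
  · have := card_right_lt T hr (by omega)
    omega

end Linear

/-! ### From the circle to the linear model -/

section Cyclic

variable {n ℓ k : ℕ}

/-- The position of `x` on the circle cut open at `c`, counted from `0` at `c`. -/
def pos (c x : Fin n) : ℕ := if c ≤ x then (x : ℕ) - c else x + n - c

lemma pos_cases (c x : Fin n) :
    (c.val ≤ x.val ∧ pos c x = x.val - c.val) ∨ (x.val < c.val ∧ pos c x = x.val + n - c.val) := by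
  unfold pos
  simp only [Fin.le_def]
  split_ifs <;> omega

lemma pos_lt (c x : Fin n) : pos c x < n := by
  have := pos_cases c x
  omega

lemma pos_injective (c : Fin n) : Function.Injective (pos c) := fun x y h => by
  have := pos_cases c x
  have := pos_cases c y
  ext
  omega

lemma image_pos (c : Fin n) : univ.image (pos c) = range n := by
  refine eq_of_subset_of_card_le (fun x hx => ?_) ?_
  · obtain ⟨y, -, rfl⟩ := mem_image.1 hx
    exact mem_range.2 (pos_lt c y)
  · rw [card_image_of_injective _ (pos_injective c), card_range, card_univ, Fintype.card_fin]

lemma mem_arcCC_pos (c a b x : Fin n) : x ∈ arcCC a b ↔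
    if pos c a ≤ pos c b then pos c a ≤ pos c x ∧ pos c x ≤ pos c b
    else pos c a ≤ pos c x ∨ pos c x ≤ pos c b := by
  have h1 := pos_cases c a
  have h2 := pos_cases c b
  have h3 := pos_cases c x
  unfold arcCC
  split_ifs <;> simp only [mem_filter, mem_univ, true_and, Fin.le_def] at * <;> omega

lemma finShift_cases (hn : 0 < n) (v : Fin n) (m : ℤ) (h1 : -(n : ℤ) ≤ m) (h2 : m ≤ n) :
    ((finShift hn v m).val : ℤ) = v + m ∨ ((finShift hn v m).val : ℤ) = v + m + n ∨
      ((finShift hn v m).val : ℤ) = v + m - n := by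
  have hv := v.isLt
  have h0 := Int.emod_nonneg ((v : ℤ) + m) (by omega : (n : ℤ) ≠ 0)
  have e : ((finShift hn v m).val : ℤ) = ((v : ℤ) + m) % n := by
    simp only [finShift]
    omega
  rw [e]
  by_cases ha : (v : ℤ) + m < 0
  · right; left
    rw [← Int.add_emod_right, Int.emod_eq_of_lt] <;> omega
  by_cases hb : (v : ℤ) + m < n
  · left
    rw [Int.emod_eq_of_lt] <;> omega
  by_cases hc : (v : ℤ) + m - n < n
  · right; right
    rw [← Int.sub_emod_right, Int.emod_eq_of_lt] <;> omega
  · omega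

lemma pos_finShift (hn : 0 < n) (c v : Fin n) (m : ℤ) (h1 : 0 ≤ (pos c v : ℤ) + m)
    (h2 : (pos c v : ℤ) + m < n) : (pos c (finShift hn v m) : ℤ) = pos c v + m := by
  have hv := v.isLt
  have hp := pos_lt c v
  have := finShift_cases hn v m (by omega) (by omega)
  have := pos_cases c v
  have := pos_cases c (finShift hn v m)
  have := (finShift hn v m).isLt
  omega

/-- The index of the `t`-th entry after `w_i` in the cyclic order of a semi-valid tuple, namely
`i + 2t`. -/
def idx (i : Fin (2 * ℓ + 1)) (t : ℕ) : Fin (2 * ℓ + 1) :=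
  i + ⟨(2 * t) % (2 * ℓ + 1), Nat.mod_lt _ (by omega)⟩

lemma idx_val (i : Fin (2 * ℓ + 1)) (t : ℕ) : (idx i t).val = (i.val + 2 * t) % (2 * ℓ + 1) := by
  simp [idx, Fin.val_add, Nat.add_mod]

lemma idx_sub_val (i : Fin (2 * ℓ + 1)) (t : ℕ) :
    (idx i t - i).val = (2 * t) % (2 * ℓ + 1) := by
  simp [idx]

lemma idx_zero (i : Fin (2 * ℓ + 1)) : idx i 0 = i := by
  ext; rw [idx_val]; exact Nat.mod_eq_of_lt i.isLt

lemma idx_add_period (i : Fin (2 * ℓ + 1)) (t : ℕ) : idx i (t + (2 * ℓ + 1)) = idx i t := by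
  ext
  rw [idx_val, idx_val, show i.val + 2 * (t + (2 * ℓ + 1)) = i.val + 2 * t + 2 * (2 * ℓ + 1) by ring,
    Nat.add_mul_mod_self_right]

lemma idx_idx (i : Fin (2 * ℓ + 1)) (s t : ℕ) : idx (idx i s) t = idx i (s + t) := by
  ext
  rw [idx_val, idx_val, idx_val, Nat.mod_add_mod,
    show i.val + 2 * (s + t) = i.val + 2 * s + 2 * t by ring]

lemma idx_sub_one (i : Fin (2 * ℓ + 1)) (t : ℕ) : idx i t - 1 = idx i (t + ℓ) := by
  rw [sub_eq_iff_eq_add]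
  ext
  rw [Fin.val_add, idx_val, idx_val, Fin.val_one', ← Nat.add_mod,
    show i.val + 2 * (t + ℓ) + 1 = i.val + 2 * t + (2 * ℓ + 1) by ring, Nat.add_mod_right]

lemma two_mul_mod {t : ℕ} (ht : t < 2 * ℓ + 1) :
    (t ≤ ℓ ∧ (2 * t) % (2 * ℓ + 1) = 2 * t) ∨
      (ℓ < t ∧ (2 * t) % (2 * ℓ + 1) = 2 * t - (2 * ℓ + 1)) := by
  by_cases h : t ≤ ℓ
  · exact .inl ⟨h, Nat.mod_eq_of_lt (by omega)⟩
  · refine .inr ⟨by omega, ?_⟩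
    rw [Nat.mod_eq_sub_mod (by omega), Nat.mod_eq_of_lt (by omega)]

lemma idx_inj (i : Fin (2 * ℓ + 1)) {s t : ℕ} (hs : s < 2 * ℓ + 1) (ht : t < 2 * ℓ + 1)
    (h : idx i s = idx i t) : s = t := by
  have h' : (2 * s) % (2 * ℓ + 1) = (2 * t) % (2 * ℓ + 1) := by
    rw [← idx_sub_val i s, h, idx_sub_val]
  have := two_mul_mod hs
  have := two_mul_mod ht
  omega

lemma idx_surj (i p : Fin (2 * ℓ + 1)) : ∃ t < 2 * ℓ + 1, idx i t = p := by
  have hinj : Function.Injective fun t : Fin (2 * ℓ + 1) => idx i t :=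
    fun s t h => Fin.ext (idx_inj i s.isLt t.isLt h)
  obtain ⟨t, ht⟩ := Finite.surjective_of_injective hinj p
  exact ⟨t, t.isLt, ht⟩

/-- A semi-valid tuple has a starting point from which its entries increase in the linear order of
`Fin n`; `A` is the place of `w_i` in this list `z`. -/
lemma exists_lift {w : Fin (2 * ℓ + 1) → Fin n} (h : SemiValid ℓ w) (i : Fin (2 * ℓ + 1)) :
    ∃ (z : ℕ → Fin n) (A : ℕ), A < 2 * ℓ + 1 ∧
      (∀ p q, p < q → q < 2 * ℓ + 1 → z p < z q) ∧
      ∀ t < 2 * ℓ + 1,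
        w (idx i t) = z (if A + t < 2 * ℓ + 1 then A + t else A + t - (2 * ℓ + 1)) := by
  obtain ⟨K, hK⟩ := h.2
  obtain ⟨A, hA, hAi⟩ := idx_surj (idx 0 K) i
  refine ⟨fun p => w (idx (idx 0 K) p), A, hA, fun p q hpq hq => ?_, fun t ht => ?_⟩
  · have hK' := List.isChain_iff_pairwise.1 hK
    rw [List.pairwise_iff_getElem] at hK'
    have := hK' p q (by simp; omega) (by simpa using hq) hpq
    simp only [List.getElem_rotate, List.getElem_ofFn, List.length_ofFn] at this
    convert this using 2 <;>
    · ext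
      simp only [idx_idx, idx_val, Fin.val_zero, Nat.zero_add, Nat.mul_mod_mod, Nat.add_comm K]
  · subst hAi
    rw [idx_idx]
    split_ifs with hlt
    · rfl
    · change _ = w (idx (idx 0 K) (A + t - (2 * ℓ + 1)))
      rw [← idx_add_period _ (A + t - (2 * ℓ + 1)), Nat.sub_add_cancel (by omega)]

/-- Seen from a point `c` immediately before `w_i` and outside the tuple, the entries of a
semi-valid tuple appear in increasing order. -/
lemma pos_strictMono {w : Fin (2 * ℓ + 1) → Fin n} (h : SemiValid ℓ w) (i : Fin (2 * ℓ + 1))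
    {c : Fin n} (hc1 : pos c (w i) = 1) (hc : ∀ p, w p ≠ c) {s t : ℕ} (hst : s < t)
    (ht : t < 2 * ℓ + 1) : pos c (w (idx i s)) < pos c (w (idx i t)) := by
  obtain ⟨z, A, hA, hz, hw⟩ := exists_lift h i
  have h0 : w i = z A := by
    have := hw 0 (by omega)
    rwa [idx_zero, if_pos (by omega)] at this
  have hs' := hw s (by omega)
  have ht' := hw t ht
  have hsc : (w (idx i s)).val ≠ c.val := fun e => hc _ (Fin.ext e)
  have htc : (w (idx i t)).val ≠ c.val := fun e => hc _ (Fin.ext e)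
  have hAc : (w i).val ≠ c.val := fun e => hc _ (Fin.ext e)
  have p0 := pos_cases c (w i)
  have ps := pos_cases c (w (idx i s))
  have pt := pos_cases c (w (idx i t))
  have hz' : ∀ p q, p < q → q < 2 * ℓ + 1 → (z p).val < (z q).val := hz
  have le : ∀ {p q}, p ≤ q → q < 2 * ℓ + 1 → (z p).val ≤ (z q).val := fun {p q} h1 h2 => by
    rcases h1.eq_or_lt with rfl | h1
    · exact le_rfl
    · exact (hz' _ _ h1 h2).le
  rw [hs'] at hsc ps ⊢
  rw [ht'] at htc pt ⊢
  rw [h0] at hAc p0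
  rw [h0] at hc1
  have := (z A).isLt
  split_ifs at hsc ps htc pt ⊢ with c1 c2 c2
  · have := le (show A ≤ A + s by omega) c1
    have := hz' (A + s) (A + t) (by omega) c2
    omega
  · have := le (show A ≤ A + s by omega) c1
    have := hz' (A + t - (2 * ℓ + 1)) A (by omega) (by omega)
    have := (z (A + s)).isLt
    omega
  · omega
  · have := hz' (A + s - (2 * ℓ + 1)) (A + t - (2 * ℓ + 1)) (by omega) (by omega)
    have := hz' (A + t - (2 * ℓ + 1)) A (by omega) (by omega)
    omega

/-- `HnC` and its linear model have the same size: passing to positions seen from `c` is a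
bijection between them. -/
lemma card_HnC {r : ℕ} {w : Fin (2 * ℓ + 1) → Fin n} {i : Fin (2 * ℓ + 1)} {c : Fin n} {g : ℕ → ℕ}
    (hg : ∀ t < 2 * ℓ + 1, pos c (w (idx i t)) = g t)
    (hmono : ∀ s t, s < t → t < 2 * ℓ + 1 → g s < g t) :
    (HnC r ℓ w).card = (linFam n r ℓ g).card := by
  have hle : ∀ t ≤ ℓ, g t ≤ g (t + ℓ) := fun t ht => by
    rcases Nat.eq_zero_or_pos ℓ with h | h
    · rw [h, Nat.add_zero]
    · exact (hmono t (t + ℓ) (by omega) (by omega)).le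
  have key : ∀ e : Finset (Fin n), e ∈ HnC r ℓ w ↔ e.image (pos c) ∈ linFam n r ℓ g := by
    intro e
    rw [mem_linFam]
    simp only [HnC, mem_filter, mem_powersetCard, subset_univ, true_and,
      card_image_of_injective _ (pos_injective c), exists_mem_image, forall_mem_image, pos_lt,
      implies_true]
    refine and_congr_right fun _ => ⟨fun h => ⟨fun t ht => ?_, fun t ht => ?_⟩, fun h p => ?_⟩
    · obtain ⟨x, hx⟩ := h (idx i t)
      rw [mem_inter, mem_arcCC_pos c, idx_sub_one, hg t (by omega), hg (t + ℓ) (by omega),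
        if_pos (hle t ht)] at hx
      exact ⟨x, hx⟩
    · obtain ⟨x, hx⟩ := h (idx i (t + ℓ + 1))
      rw [mem_inter, mem_arcCC_pos c, idx_sub_one, show t + ℓ + 1 + ℓ = t + (2 * ℓ + 1) by ring,
        idx_add_period, hg t (by omega), hg (t + ℓ + 1) (by omega),
        if_neg (not_le.2 (hmono _ _ (by omega) (by omega)))] at hx
      exact ⟨x, hx.1, hx.2.symm⟩
    · obtain ⟨t, ht, rfl⟩ := idx_surj i p
      by_cases htl : t ≤ ℓ
      · obtain ⟨x, hx⟩ := h.1 t htl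
        refine ⟨x, ?_⟩
        rw [mem_inter, mem_arcCC_pos c, idx_sub_one, hg t (by omega), hg (t + ℓ) (by omega),
          if_pos (hle t htl)]
        exact hx
      · obtain ⟨t, rfl⟩ : ∃ t', t = t' + ℓ + 1 := ⟨t - ℓ - 1, by omega⟩
        obtain ⟨x, hx⟩ := h.2 t (by omega)
        refine ⟨x, ?_⟩
        rw [mem_inter, mem_arcCC_pos c, idx_sub_one, show t + ℓ + 1 + ℓ = t + (2 * ℓ + 1) by ring,
          idx_add_period, hg t (by omega), hg (t + ℓ + 1) (by omega),
          if_neg (not_le.2 (hmono _ _ (by omega) (by omega)))]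
        exact ⟨hx.1, hx.2.symm⟩
  have himg : linFam n r ℓ g = (HnC r ℓ w).image (fun e => e.image (pos c)) := by
    ext f
    rw [mem_image]
    constructor
    · intro hf
      have hsub : f ⊆ univ.image (pos c) := by
        rw [image_pos]
        exact fun x hx => mem_range.2 ((mem_linFam.1 hf).1.1 x hx)
      obtain ⟨e, -, rfl⟩ := subset_image_iff.1 hsub
      exact ⟨e, (key e).2 hf, rfl⟩
    · rintro ⟨e, he, rfl⟩
      exact (key e).1 he
  rw [himg, card_image_of_injective _ (image_injective (pos_injective c))]

lemma shiftTuple_idx (hn : 0 < n) (w : Fin (2 * ℓ + 1) → Fin n) (i : Fin (2 * ℓ + 1)) (hk : k ≤ ℓ)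
    (m : ℤ) {t : ℕ} (ht : t < 2 * ℓ + 1) : shiftTuple hn w i k m (idx i t) =
      if t < k then finShift hn (w (idx i t)) m else w (idx i t) := by
  have := two_mul_mod ht
  have hiff : (idx i t - i).val % 2 = 0 ∧ (idx i t - i).val / 2 < k ↔ t < k := by
    rw [idx_sub_val]
    omega
  simp only [shiftTuple, hiff]

end Cyclic

-- STATEMENT 18
theorem local_move (n r ℓ : ℕ) (hr : 2 ≤ r) (hℓ : 1 ≤ ℓ) (hn : 0 < n)
    (w : Fin (2 * ℓ + 1) → Fin n) (i : Fin (2 * ℓ + 1)) (k : ℕ)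
    (hk1 : 1 ≤ k) (hk2 : k ≤ ℓ) (hcons : ConsecAt hn w i k)
    (hsm : SemiValid ℓ (shiftTuple hn w i k (-1)))
    (hs0 : SemiValid ℓ w)
    (hsp : SemiValid ℓ (shiftTuple hn w i k 1)) :
    min (HnC r ℓ (shiftTuple hn w i k (-1))).card (HnC r ℓ (shiftTuple hn w i k 1)).card
        ≤ (HnC r ℓ w).card ∧
    (3 ≤ r → 3 * r - 5 ≤ n →
      min (HnC r ℓ (shiftTuple hn w i k (-1))).card (HnC r ℓ (shiftTuple hn w i k 1)).card
        < (HnC r ℓ w).card) := by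
  -- Cut the circle at the point `c` just before the block, so that the block occupies positions
  -- `1, …, k`.
  obtain ⟨j, hj⟩ := hcons
  have hcard : 2 * ℓ + 1 ≤ n := by
    simpa only [Fintype.card_fin] using Fintype.card_le_of_injective w hs0.1
  set c : Fin n := finShift hn j (-1) with hc
  have hcj : pos c j = 1 := by
    have := finShift_cases hn j (-1) (by omega) (by omega)
    have := pos_cases c j
    have := c.isLt
    rw [← hc] at *
    omega
  have hblk : ∀ t < k, pos c (w (idx i t)) = t + 1 := fun t ht => by
    have := pos_finShift hn c j t (by omega) (by omega)
    rw [show w (idx i t) = finShift hn j t from hj t ht]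
    omega
  have hwi : pos c (w i) = 1 := by
    have := hblk 0 hk1
    rwa [idx_zero] at this
  -- Injectivity of the two shifted tuples keeps the other entries off positions `0` and `k+1`.
  have hne0 : ∀ t < 2 * ℓ + 1, pos c (w (idx i t)) ≠ 0 := fun t ht h => by
    by_cases htk : t < k
    · rw [hblk t htk] at h
      omega
    have := pos_finShift hn c (w (idx i 0)) (-1) (by rw [hblk 0 hk1]; omega)
      (by rw [hblk 0 hk1]; omega)
    have he : shiftTuple hn w i k (-1) (idx i 0) = shiftTuple hn w i k (-1) (idx i t) := by
      rw [shiftTuple_idx hn w i hk2 _ (by omega), shiftTuple_idx hn w i hk2 _ ht,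
        if_pos (show 0 < k from hk1), if_neg htk]
      apply pos_injective c
      rw [hblk 0 hk1] at this
      omega
    have := idx_inj i (by omega) ht (hsm.1 he)
    omega
  have hnek : pos c (w (idx i k)) ≠ k + 1 := fun h => by
    have := pos_finShift hn c (w (idx i (k - 1))) 1 (by omega)
      (by rw [hblk _ (by omega)]; omega)
    have he : shiftTuple hn w i k 1 (idx i (k - 1)) = shiftTuple hn w i k 1 (idx i k) := by
      rw [shiftTuple_idx hn w i hk2 _ (by omega), shiftTuple_idx hn w i hk2 _ (by omega),
        if_pos (by omega), if_neg (lt_irrefl k)]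
      apply pos_injective c
      rw [hblk _ (by omega)] at this
      omega
    have := idx_inj i (by omega) (by omega) (hsp.1 he)
    omega
  have hcw : ∀ p, w p ≠ c := fun p h => by
    obtain ⟨t, ht, rfl⟩ := idx_surj i p
    have := hne0 t ht
    have := pos_cases c (w (idx i t))
    rw [h] at *
    omega
  have hmono : ∀ s t, s < t → t < 2 * ℓ + 1 → pos c (w (idx i s)) < pos c (w (idx i t)) :=
    fun s t hst ht => pos_strictMono hs0 i hwi hcw hst ht
  obtain ⟨g, hg⟩ : ∃ g : ℕ → ℕ, ∀ t, pos c (w (idx i t)) = g t := ⟨_, fun _ => rfl⟩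
  simp only [hg] at hblk hne0 hnek hmono
  have hclear : k + 2 ≤ g k := by
    have := hmono (k - 1) k (by omega) (by omega)
    rw [hblk (k - 1) (by omega)] at this
    omega
  have T : Tail n ℓ k g := by
    refine ⟨hk1, hk2, fun s t _ hst ht => ?_, hmono _ _ (by omega) (by omega), hclear,
      hg (2 * ℓ) ▸ pos_lt c _⟩
    rcases hst.eq_or_lt with rfl | hst
    · exact le_rfl
    · exact (hmono s t hst (by omega)).le
  have bmono : ∀ m ≤ 2, ∀ s t, s < t → t < 2 * ℓ + 1 → blk k g m s < blk k g m t := by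
    intro m hm s t hst ht
    unfold blk
    split_ifs with h1 h2 h2
    · omega
    · have := T.mono k t (by omega) (by omega) (by omega)
      omega
    · omega
    · exact hmono s t hst ht
  have h0 : (HnC r ℓ (shiftTuple hn w i k (-1))).card = (linFam n r ℓ (blk k g 0)).card := by
    refine card_HnC (i := i) (c := c) (fun t ht => ?_) (bmono 0 (by omega))
    rw [shiftTuple_idx hn w i hk2 _ ht, blk]
    split_ifs with h
    · have hp := hblk t h
      rw [← hg] at hp
      have := pos_finShift hn c (w (idx i t)) (-1) (by omega) (by omega)
      omega
    · exact hg t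
  have h2 : (HnC r ℓ (shiftTuple hn w i k 1)).card = (linFam n r ℓ (blk k g 2)).card := by
    refine card_HnC (i := i) (c := c) (fun t ht => ?_) (bmono 2 le_rfl)
    rw [shiftTuple_idx hn w i hk2 _ ht, blk]
    split_ifs with h
    · have hp := hblk t h
      rw [← hg] at hp
      have := pos_finShift hn c (w (idx i t)) 1 (by omega) (by omega)
      omega
    · exact hg t
  have h1 : (HnC r ℓ w).card = (linFam n r ℓ (blk k g 1)).card := by
    refine card_HnC (i := i) (c := c) (fun t ht => ?_) (bmono 1 (by omega))
    rw [hg, blk]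
    split_ifs with h
    · exact hblk t h
    · rfl
  rw [h0, h1, h2]
  exact linear_move T
end
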